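/- arXiv:0709.4332 — 5 statements merged into one kernel-verified Lean document; each statement's English description precedes it below -/
import Mathlib

section
/- Let 0 ≤ ε < 1 and let I be a nondegenerate bounded interval. Then for every φ ∈ BMO_ε(I), the function e^φ is integrable on I and ⟨e^φ⟩_I ≤ (e^{−ε}/(1−ε))·e^{⟨φ⟩_I}. -/
open MeasureTheory Real

/-- The average of `φ` over the interval with endpoints `a`, `b`. -/
noncomputable def avg (φ : ℝ → ℝ) (a b : ℝ) : ℝ := (∫ t in a..b, φ t) / (b - a)

/-- `φ ∈ BMO_ε([a,b])`: `φ` and `φ²` are integrable on `[a,b]` and the mean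
oscillation `⟨φ²⟩_J − ⟨φ⟩_J²` is at most `ε²` on every nondegenerate
subinterval `J = [c,d] ⊆ [a,b]`. -/
def BMOe (ε a b : ℝ) (φ : ℝ → ℝ) : Prop :=
  IntervalIntegrable φ volume a b ∧
  IntervalIntegrable (fun t => (φ t) ^ 2) volume a b ∧
  ∀ c d : ℝ, a ≤ c → c < d → d ≤ b →
    avg (fun t => (φ t) ^ 2) c d - (avg φ c d) ^ 2 ≤ ε ^ 2


/-- The Bellman function. -/
noncomputable def Bel (δ x y : ℝ) : ℝ :=
  (1 - √(δ ^ 2 - (y - x ^ 2))) / (1 - δ) * Real.exp (x + √(δ ^ 2 - (y - x ^ 2)) - δ)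

lemma key_g (s d : ℝ) (hs : 0 ≤ s) (hd : -s ≤ d) :
    Real.exp s * (1 - s) ≤ Real.exp d * ((d ^ 2 - s ^ 2) / 2 + 1 - d) := by
  have hder : ∀ x : ℝ, HasDerivAt (fun d => Real.exp d * ((d ^ 2 - s ^ 2) / 2 + 1 - d))
      (Real.exp x * ((x ^ 2 - s ^ 2) / 2)) x := by
    intro x
    have h1 : HasDerivAt (fun d : ℝ => (d ^ 2 - s ^ 2) / 2 + 1 - d) (x - 1) x := by
      have := (((((hasDerivAt_id x).pow 2).sub_const (s ^ 2)).div_const 2).add_const 1).sub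
        (hasDerivAt_id x)
      refine this.congr_deriv ?_
      simp
    refine ((Real.hasDerivAt_exp x).mul h1).congr_deriv ?_
    ring
  have hcont : Continuous (fun d => Real.exp d * ((d ^ 2 - s ^ 2) / 2 + 1 - d)) := by fun_prop
  have e0 : Real.exp s * (1 - s) = Real.exp s * ((s ^ 2 - s ^ 2) / 2 + 1 - s) := by ring
  rw [e0]
  rcases le_total d s with h | h
  · have : AntitoneOn (fun d => Real.exp d * ((d ^ 2 - s ^ 2) / 2 + 1 - d)) (Set.Icc (-s) s) := by
      refine antitoneOn_of_deriv_nonpos (convex_Icc _ _) hcont.continuousOn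
        (fun x _ => (hder x).differentiableAt.differentiableWithinAt) ?_
      intro x hx
      rw [interior_Icc] at hx
      rw [(hder x).deriv]
      have : x ^ 2 - s ^ 2 ≤ 0 := by nlinarith [hx.1, hx.2]
      have := Real.exp_pos x
      nlinarith
    exact this ⟨hd, h⟩ ⟨by linarith, le_rfl⟩ h
  · have : MonotoneOn (fun d => Real.exp d * ((d ^ 2 - s ^ 2) / 2 + 1 - d)) (Set.Ici s) := by
      refine monotoneOn_of_deriv_nonneg (convex_Ici _) hcont.continuousOn
        (fun x _ => (hder x).differentiableAt.differentiableWithinAt) ?_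
      intro x hx
      rw [interior_Ici] at hx
      rw [(hder x).deriv]
      have hx' : s < x := hx
      have : 0 ≤ x ^ 2 - s ^ 2 := by nlinarith
      have := Real.exp_pos x
      positivity
    exact this (Set.mem_Ici.2 le_rfl) h h

lemma Bel_le_plane (δ m x y : ℝ) (hδ : δ < 1) (hV : y - x ^ 2 ≤ δ ^ 2)
    (hm : x ≤ m + √(δ ^ 2 - (y - x ^ 2))) :
    Bel δ x y ≤ Real.exp (m - δ) / (1 - δ) *
      ((y - δ ^ 2) / 2 + (1 - m) * x + 1 - m + m ^ 2 / 2) := by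
  unfold Bel
  set s := √(δ ^ 2 - (y - x ^ 2)) with hs
  have hs0 : 0 ≤ s := Real.sqrt_nonneg _
  have hs2 : s ^ 2 = δ ^ 2 - (y - x ^ 2) := Real.sq_sqrt (by linarith)
  have hk := key_g s (m - x) hs0 (by linarith)
  have h1 : Real.exp (x + s - δ) = Real.exp (x - δ) * Real.exp s := by
    rw [← Real.exp_add]; ring_nf
  have h2 : Real.exp (m - δ) = Real.exp (x - δ) * Real.exp (m - x) := by
    rw [← Real.exp_add]; ring_nf
  have h3 : (y - δ ^ 2) / 2 + (1 - m) * x + 1 - m + m ^ 2 / 2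
      = ((m - x) ^ 2 - s ^ 2) / 2 + 1 - (m - x) := by rw [hs2]; ring
  rw [h1, h2, h3]
  have hp : 0 ≤ Real.exp (x - δ) / (1 - δ) := div_nonneg (Real.exp_pos _).le (by linarith)
  have := mul_le_mul_of_nonneg_left hk hp
  calc _ = Real.exp (x - δ) / (1 - δ) * (Real.exp s * (1 - s)) := by ring
    _ ≤ _ := this
    _ = _ := by ring

lemma Bel_split (δ α β p p' q q' r r' : ℝ) (hδ : δ < 1) (hα : 0 ≤ α) (hβ : 0 ≤ β)
    (hαβ : α + β = 1) (hr : r = α * p + β * q) (hr' : r' = α * p' + β * q')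
    (hVp : p' - p ^ 2 ≤ δ ^ 2) (hVq : q' - q ^ 2 ≤ δ ^ 2) (hVr : r' - r ^ 2 ≤ δ ^ 2)
    (hp : p ≤ r + √(δ ^ 2 - (r' - r ^ 2))) (hq : q ≤ r + √(δ ^ 2 - (r' - r ^ 2))) :
    α * Bel δ p p' + β * Bel δ q q' ≤ Bel δ r r' := by
  set s := √(δ ^ 2 - (r' - r ^ 2)) with hs
  have hs2 : s ^ 2 = δ ^ 2 - (r' - r ^ 2) := Real.sq_sqrt (by linarith)
  have h1 := Bel_le_plane δ (r + s) p p' hδ hVp (by linarith [Real.sqrt_nonneg (δ ^ 2 - (p' - p ^ 2))])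
  have h2 := Bel_le_plane δ (r + s) q q' hδ hVq (by linarith [Real.sqrt_nonneg (δ ^ 2 - (q' - q ^ 2))])
  have h3 : Bel δ r r' = Real.exp (r + s - δ) / (1 - δ) *
      ((r' - δ ^ 2) / 2 + (1 - (r + s)) * r + 1 - (r + s) + (r + s) ^ 2 / 2) := by
    unfold Bel
    rw [← hs]
    have : (r' - δ ^ 2) / 2 + (1 - (r + s)) * r + 1 - (r + s) + (r + s) ^ 2 / 2 = 1 - s := by
      linear_combination hs2 / 2
    rw [this]; ring
  rw [h3]
  have h4 := mul_le_mul_of_nonneg_left h1 hα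
  have h5 := mul_le_mul_of_nonneg_left h2 hβ
  refine (add_le_add h4 h5).trans (le_of_eq ?_)
  rw [hr'] at *
  generalize hm : r + s = m
  have hb : β = 1 - α := by linarith
  rw [hr, hb]
  ring

lemma Bel_nonneg (δ x y : ℝ) (hδ0 : 0 ≤ δ) (hδ : δ < 1) (h : x ^ 2 ≤ y) : 0 ≤ Bel δ x y := by
  unfold Bel
  have : √(δ ^ 2 - (y - x ^ 2)) ≤ δ := by
    rw [Real.sqrt_le_left hδ0]; linarith
  have h1 : 0 ≤ 1 - √(δ ^ 2 - (y - x ^ 2)) := by linarith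
  have h2 : 0 ≤ 1 - δ := by linarith
  positivity

lemma Bel_upper (δ x y : ℝ) (hδ : δ < 1) :
    Bel δ x y ≤ Real.exp (-δ) / (1 - δ) * Real.exp x := by
  unfold Bel
  set s := √(δ ^ 2 - (y - x ^ 2))
  have h1 : (1 - s) * Real.exp s ≤ 1 := by
    have h := Real.add_one_le_exp (-s)
    have h2 : Real.exp (-s) * Real.exp s = 1 := by rw [← Real.exp_add]; simp
    nlinarith [Real.exp_pos s]
  have h2 : 0 ≤ Real.exp (-δ) / (1 - δ) * Real.exp x := by
    have : 0 ≤ 1 - δ := by linarith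
    positivity
  have h3 : Real.exp (x + s - δ) = Real.exp (-δ) * Real.exp x * Real.exp s := by
    rw [← Real.exp_add, ← Real.exp_add]; ring_nf
  rw [h3]
  calc _ = Real.exp (-δ) / (1 - δ) * Real.exp x * ((1 - s) * Real.exp s) := by ring
    _ ≤ Real.exp (-δ) / (1 - δ) * Real.exp x * 1 := mul_le_mul_of_nonneg_left h1 h2
    _ = _ := by ring

lemma Bel_diag (δ x : ℝ) (hδ0 : 0 ≤ δ) (hδ : δ < 1) : Bel δ x (x ^ 2) = Real.exp x := by
  unfold Bel
  have : √(δ ^ 2 - (x ^ 2 - x ^ 2)) = δ := by simp [Real.sqrt_sq hδ0]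
  rw [this, div_self (by linarith)]
  simp

lemma Bel_cont (δ : ℝ) : Continuous (fun z : ℝ × ℝ => Bel δ z.1 z.2) := by
  unfold Bel
  fun_prop

lemma avg_sq_le (φ : ℝ → ℝ) (c d : ℝ) (hcd : c < d) (h1 : IntervalIntegrable φ volume c d)
    (h2 : IntervalIntegrable (fun t => (φ t) ^ 2) volume c d) :
    (avg φ c d) ^ 2 ≤ avg (fun t => (φ t) ^ 2) c d := by
  set m := avg φ c d with hm
  have hpos : 0 < d - c := by linarith
  have hI : ∫ t in c..d, φ t = m * (d - c) := by rw [hm, avg]; field_simp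
  have h : 0 ≤ ∫ t in c..d, ((φ t) ^ 2 - 2 * m * φ t + m ^ 2) := by
    apply intervalIntegral.integral_nonneg hcd.le
    intro t _
    nlinarith [sq_nonneg (φ t - m)]
  rw [intervalIntegral.integral_add (h2.sub (h1.const_mul _)) (by simp),
    intervalIntegral.integral_sub h2 (h1.const_mul _), intervalIntegral.integral_const_mul, hI,
    intervalIntegral.integral_const, smul_eq_mul] at h
  unfold avg
  rw [le_div_iff₀ hpos]
  nlinarith

lemma avg_comb (φ : ℝ → ℝ) (c τ d : ℝ) (h1 : c < τ) (h2 : τ < d)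
    (hi : IntervalIntegrable φ volume c τ) (hi' : IntervalIntegrable φ volume τ d) :
    avg φ c d = (τ - c) / (d - c) * avg φ c τ + (d - τ) / (d - c) * avg φ τ d := by
  unfold avg
  rw [← intervalIntegral.integral_add_adjacent_intervals hi hi']
  have : τ - c ≠ 0 := by linarith
  have : d - τ ≠ 0 := by linarith
  have : d - c ≠ 0 := by linarith
  field_simp

lemma BMOe.sub {ε a b : ℝ} {φ : ℝ → ℝ} (h : BMOe ε a b φ) {c d : ℝ} (hc : a ≤ c) (hcd : c < d)
    (hd : d ≤ b) : BMOe ε c d φ := by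
  have hs : Set.uIcc c d ⊆ Set.uIcc a b := by
    rw [Set.uIcc_of_le hcd.le, Set.uIcc_of_le (by linarith)]
    exact Set.Icc_subset_Icc hc hd
  exact ⟨h.1.mono_set hs, h.2.1.mono_set hs, fun u v hu huv hv => h.2.2 u v (by linarith) huv (by linarith)⟩

/-- variance computation -/
lemma dev_le (ε σ α β p p' q q' r r' : ℝ) (hσ : 0 ≤ σ) (hα : 0 < α) (hβ : 0 < β)
    (hαβ : α + β = 1) (hr : r = α * p + β * q) (hr' : r' = α * p' + β * q')
    (hp : p ^ 2 ≤ p') (hq : q ^ 2 ≤ q') (hV : r' - r ^ 2 ≤ ε ^ 2) (h : α * ε ^ 2 ≤ β * σ ^ 2) :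
    q ≤ r + σ := by
  have e1 : r' - r ^ 2 = α * (p' - p ^ 2) + β * (q' - q ^ 2) + α * β * (p - q) ^ 2 := by
    have hb : β = 1 - α := by linarith
    rw [hr, hr', hb]; ring
  have h1 : 0 ≤ α * (p' - p ^ 2) := mul_nonneg hα.le (by linarith)
  have h2 : 0 ≤ β * (q' - q ^ 2) := mul_nonneg hβ.le (by linarith)
  have e2 : q - r = α * (q - p) := by
    have hb : β = 1 - α := by linarith
    rw [hr, hb]; ring
  have h3 : β * (q - r) ^ 2 ≤ β * σ ^ 2 := by
    rw [e2]
    have : α * (α * β * (p - q) ^ 2) ≤ α * ε ^ 2 := mul_le_mul_of_nonneg_left (by linarith) hα.le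
    nlinarith
  have h4 : (q - r) ^ 2 ≤ σ ^ 2 := le_of_mul_le_mul_left h3 hβ
  have := abs_le_of_sq_le_sq h4 hσ
  linarith [le_abs_self (q - r)]

lemma exists_split (ε σ θ c d : ℝ) (φ : ℝ → ℝ) (hcd : c < d) (hφ : BMOe ε c d φ) (hσ : 0 ≤ σ)
    (hθ : 0 < θ) (hθ2 : θ ≤ 1 / 2) (h : θ * ε ^ 2 ≤ (1 - θ) * σ ^ 2) :
    ∃ τ, c + θ * (d - c) ≤ τ ∧ τ ≤ d - θ * (d - c) ∧ avg φ c τ ≤ avg φ c d + σ ∧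
      avg φ τ d ≤ avg φ c d + σ := by
  have hpos : 0 < d - c := by linarith
  have hθp : 0 < θ * (d - c) := by positivity
  have hθq : θ * (d - c) ≤ (d - c) / 2 := by nlinarith
  have hL : ∀ τ, c < τ → τ < d → BMOe ε c τ φ := fun τ h1 h2 => hφ.sub le_rfl h1 h2.le
  have hR : ∀ τ, c < τ → τ < d → BMOe ε τ d φ := fun τ h1 h2 => hφ.sub h1.le h2 le_rfl
  have hV := hφ.2.2 c d le_rfl hcd le_rfl
  have comb1 : ∀ τ, c < τ → τ < d → _ := fun τ h1 h2 =>
    avg_comb φ c τ d h1 h2 (hL τ h1 h2).1 (hR τ h1 h2).1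
  have comb2 : ∀ τ, c < τ → τ < d → _ := fun τ h1 h2 =>
    avg_comb (fun t => (φ t) ^ 2) c τ d h1 h2 (hL τ h1 h2).2.1 (hR τ h1 h2).2.1
  have sumone : ∀ τ, (τ - c) / (d - c) + (d - τ) / (d - c) = 1 := by
    intro τ; field_simp; ring
  -- if the left mean is at least the mean then the right mean is at most the mean
  have opp1 : ∀ τ, c < τ → τ < d → avg φ c d ≤ avg φ c τ → avg φ τ d ≤ avg φ c d := by
    intro τ h1 h2 hle
    have e := comb1 τ h1 h2
    have s1 := sumone τ
    have a1 : 0 < (τ - c) / (d - c) := div_pos (by linarith) hpos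
    have a2 : 0 < (d - τ) / (d - c) := div_pos (by linarith) hpos
    by_contra hc
    push Not at hc
    have i1 := mul_le_mul_of_nonneg_left hle a1.le
    have i2 := mul_lt_mul_of_pos_left hc a2
    have i3 : (τ - c) / (d - c) * avg φ c d + (d - τ) / (d - c) * avg φ c d = avg φ c d := by
      rw [← add_mul, s1, one_mul]
    linarith
  have opp2 : ∀ τ, c < τ → τ < d → avg φ c d ≤ avg φ τ d → avg φ c τ ≤ avg φ c d := by
    intro τ h1 h2 hle
    have e := comb1 τ h1 h2
    have s1 := sumone τ
    have a1 : 0 < (τ - c) / (d - c) := div_pos (by linarith) hpos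
    have a2 : 0 < (d - τ) / (d - c) := div_pos (by linarith) hpos
    by_contra hc
    push Not at hc
    have i1 := mul_le_mul_of_nonneg_left hle a2.le
    have i2 := mul_lt_mul_of_pos_left hc a1
    have i3 : (τ - c) / (d - c) * avg φ c d + (d - τ) / (d - c) * avg φ c d = avg φ c d := by
      rw [← add_mul, s1, one_mul]
    linarith
  set τ₁ := c + θ * (d - c) with hτ₁
  set τ₂ := d - θ * (d - c) with hτ₂
  have c1 : c < τ₁ := by linarith
  have d1 : τ₁ < d := by linarith
  have c2 : c < τ₂ := by linarith
  have d2 : τ₂ < d := by linarith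
  have h12 : τ₁ ≤ τ₂ := by linarith
  have w1 : (τ₁ - c) / (d - c) = θ := by rw [hτ₁]; field_simp; ring
  have w1' : (d - τ₁) / (d - c) = 1 - θ := by linarith [sumone τ₁]
  have w2' : (d - τ₂) / (d - c) = θ := by rw [hτ₂]; field_simp; ring
  have w2 : (τ₂ - c) / (d - c) = 1 - θ := by linarith [sumone τ₂]
  by_cases k1 : avg φ c τ₁ ≤ avg φ c d
  · refine ⟨τ₁, le_rfl, h12, by linarith, ?_⟩
    have e1 := comb1 τ₁ c1 d1
    have e2 := comb2 τ₁ c1 d1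
    rw [w1, w1'] at e1 e2
    exact dev_le ε σ θ (1 - θ) _ _ _ _ _ _ hσ hθ (by linarith) (by ring) e1 e2
      (avg_sq_le φ _ _ c1 (hL _ c1 d1).1 (hL _ c1 d1).2.1)
      (avg_sq_le φ _ _ d1 (hR _ c1 d1).1 (hR _ c1 d1).2.1) hV h
  by_cases k2 : avg φ τ₂ d ≤ avg φ c d
  · refine ⟨τ₂, h12, le_rfl, ?_, by linarith⟩
    have e1 := comb1 τ₂ c2 d2
    have e2 := comb2 τ₂ c2 d2
    rw [w2, w2'] at e1 e2
    rw [add_comm] at e1 e2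
    exact dev_le ε σ θ (1 - θ) _ _ _ _ _ _ hσ hθ (by linarith) (by ring) e1 e2
      (avg_sq_le φ _ _ d2 (hR _ c2 d2).1 (hR _ c2 d2).2.1)
      (avg_sq_le φ _ _ c2 (hL _ c2 d2).1 (hL _ c2 d2).2.1) hV h
  push Not at k1 k2
  have hcont : ContinuousOn (fun τ => avg φ c τ) (Set.Icc τ₁ τ₂) := by
    unfold avg
    apply ContinuousOn.div
    · have := intervalIntegral.continuousOn_primitive_interval' hφ.1 (a := c) Set.left_mem_uIcc
      refine this.mono ?_
      rw [Set.uIcc_of_le hcd.le]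
      exact Set.Icc_subset_Icc c1.le d2.le
    · fun_prop
    · intro x hx
      have := hx.1
      linarith
  have h2' := opp2 τ₂ c2 d2 k2.le
  obtain ⟨τ, hτ, hτe⟩ := intermediate_value_Icc' h12 hcont ⟨h2', k1.le⟩
  have hτe' : avg φ c τ = avg φ c d := hτe
  have := opp1 τ (by linarith [hτ.1]) (by linarith [hτ.2]) hτe'.ge
  exact ⟨τ, hτ.1, hτ.2, by linarith, by linarith⟩

lemma exists_step (ε δ θ σ : ℝ) (φ : ℝ → ℝ) (hδ0 : 0 ≤ δ) (hδ : δ < 1) (hσ : 0 ≤ σ)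
    (hσδ : ε ^ 2 + σ ^ 2 = δ ^ 2)
    (hθ : 0 < θ) (hθ2 : θ ≤ 1 / 2) (h : θ * ε ^ 2 ≤ (1 - θ) * σ ^ 2) (n : ℕ) :
    ∀ c d : ℝ, c < d → BMOe ε c d φ → ∃ g : ℝ → ENNReal, Measurable g ∧
      ∫⁻ t in Set.Ioc c d, g t ≤
        ENNReal.ofReal ((d - c) * Bel δ (avg φ c d) (avg (fun t => (φ t) ^ 2) c d)) ∧
      ∀ t ∈ Set.Ioc c d, ∃ u v, u < v ∧ c ≤ u ∧ v ≤ d ∧ t ∈ Set.Icc u v ∧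
        v - u ≤ (1 - θ) ^ n * (d - c) ∧
        g t = ENNReal.ofReal (Bel δ (avg φ u v) (avg (fun t => (φ t) ^ 2) u v)) := by
  induction n with
  | zero =>
    intro c d hcd hφ
    refine ⟨fun _ => ENNReal.ofReal (Bel δ (avg φ c d) (avg (fun t => (φ t) ^ 2) c d)),
      measurable_const, ?_, ?_⟩
    · rw [setLIntegral_const, Real.volume_Ioc, mul_comm, ENNReal.ofReal_mul (by linarith)]
    · intro t ht
      exact ⟨c, d, hcd, le_rfl, le_rfl, ⟨ht.1.le, ht.2⟩, by simp, rfl⟩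
  | succ n ih =>
    intro c d hcd hφ
    have hpos : 0 < d - c := by linarith
    have hθp : 0 < θ * (d - c) := by positivity
    obtain ⟨τ, hτ1, hτ2, hm1, hm2⟩ := exists_split ε σ θ c d φ hcd hφ hσ hθ hθ2 h
    have hcτ : c < τ := by linarith
    have hτd : τ < d := by linarith
    have hL : BMOe ε c τ φ := hφ.sub le_rfl hcτ hτd.le
    have hR : BMOe ε τ d φ := hφ.sub hcτ.le hτd le_rfl
    obtain ⟨g1, hg1, hi1, hp1⟩ := ih c τ hcτ hL
    obtain ⟨g2, hg2, hi2, hp2⟩ := ih τ d hτd hR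
    have hq : 0 ≤ (1 - θ) ^ n := pow_nonneg (by linarith) n
    refine ⟨fun t => if t ≤ τ then g1 t else g2 t, ?_, ?_, ?_⟩
    · exact Measurable.ite measurableSet_Iic hg1 hg2
    · rw [← Set.Ioc_union_Ioc_eq_Ioc hcτ.le hτd.le,
        lintegral_union measurableSet_Ioc (Set.Ioc_disjoint_Ioc_of_le le_rfl)]
      have r1 : ∫⁻ t in Set.Ioc c τ, (if t ≤ τ then g1 t else g2 t) = ∫⁻ t in Set.Ioc c τ, g1 t :=
        setLIntegral_congr_fun measurableSet_Ioc (fun t ht => if_pos ht.2)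
      have r2 : ∫⁻ t in Set.Ioc τ d, (if t ≤ τ then g1 t else g2 t) = ∫⁻ t in Set.Ioc τ d, g2 t :=
        setLIntegral_congr_fun measurableSet_Ioc (fun t ht => if_neg (not_le.2 ht.1))
      rw [r1, r2]
      refine (add_le_add hi1 hi2).trans ?_
      have b1 := Bel_nonneg δ _ _ hδ0 hδ (avg_sq_le φ _ _ hcτ hL.1 hL.2.1)
      have b2 := Bel_nonneg δ _ _ hδ0 hδ (avg_sq_le φ _ _ hτd hR.1 hR.2.1)
      rw [← ENNReal.ofReal_add (mul_nonneg (by linarith) b1) (mul_nonneg (by linarith) b2)]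
      apply ENNReal.ofReal_le_ofReal
      have hVr := hφ.2.2 c d le_rfl hcd le_rfl
      have hsr : σ ≤ √(δ ^ 2 - (avg (fun t => (φ t) ^ 2) c d - (avg φ c d) ^ 2)) :=
        Real.le_sqrt_of_sq_le (by linarith)
      have hs2 := sq_nonneg σ
      have key := Bel_split δ ((τ - c) / (d - c)) ((d - τ) / (d - c)) _ _ _ _ _ _ hδ
        (div_nonneg (by linarith) hpos.le) (div_nonneg (by linarith) hpos.le)
        (by field_simp; ring)
        (avg_comb φ c τ d hcτ hτd hL.1 hR.1)
        (avg_comb (fun t => (φ t) ^ 2) c τ d hcτ hτd hL.2.1 hR.2.1)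
        (by linarith [hL.2.2 c τ le_rfl hcτ le_rfl]) (by linarith [hR.2.2 τ d le_rfl hτd le_rfl])
        (by linarith) (by linarith) (by linarith)
      have key2 := mul_le_mul_of_nonneg_left key hpos.le
      refine le_trans (le_of_eq ?_) key2
      field_simp
    · intro t ht
      by_cases htτ : t ≤ τ
      · obtain ⟨u, v, huv, hu, hv, htuv, hl, hg⟩ := hp1 t ⟨ht.1, htτ⟩
        refine ⟨u, v, huv, hu, by linarith, htuv, hl.trans ?_, by simp [htτ, hg]⟩
        rw [pow_succ, mul_assoc]
        exact mul_le_mul_of_nonneg_left (by linarith) hq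
      · obtain ⟨u, v, huv, hu, hv, htuv, hl, hg⟩ := hp2 t ⟨not_le.1 htτ, ht.2⟩
        refine ⟨u, v, huv, by linarith, hv, htuv, hl.trans ?_, by simp [htτ, hg]⟩
        rw [pow_succ, mul_assoc]
        exact mul_le_mul_of_nonneg_left (by linarith) hq

lemma ae_avg_tendsto (f : ℝ → ℝ) (a b : ℝ) (hab : a < b) (hf : IntervalIntegrable f volume a b) :
    ∀ᵐ x ∂(volume : Measure ℝ), x ∈ Set.Ioc a b → ∀ (u v : ℕ → ℝ), (∀ n, u n < v n) →
      (∀ n, a ≤ u n) → (∀ n, v n ≤ b) → (∀ n, x ∈ Set.Icc (u n) (v n)) →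
      Filter.Tendsto (fun n => v n - u n) Filter.atTop (nhds 0) →
      Filter.Tendsto (fun n => avg f (u n) (v n)) Filter.atTop (nhds (f x)) := by
  have hint : Integrable (Set.indicator (Set.Ioc a b) f) volume := by
    rw [integrable_indicator_iff measurableSet_Ioc]
    exact (intervalIntegrable_iff_integrableOn_Ioc_of_le hab.le).1 hf
  filter_upwards [IsUnifLocDoublingMeasure.ae_tendsto_average (μ := (volume : Measure ℝ))
    hint.locallyIntegrable 1] with x hx hxab u v huv hau hvb hxuv hlim
  have hlim2 : Filter.Tendsto (fun n => (v n - u n) / 2) Filter.atTop (nhdsWithin 0 (Set.Ioi 0)) := by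
    rw [tendsto_nhdsWithin_iff]
    refine ⟨by simpa using hlim.div_const 2, Filter.Eventually.of_forall fun n => ?_⟩
    have := huv n
    simp only [Set.mem_Ioi]
    linarith
  have hball : ∀ n, Metric.closedBall ((u n + v n) / 2) ((v n - u n) / 2) = Set.Icc (u n) (v n) := by
    intro n
    rw [Real.closedBall_eq_Icc]
    congr 1 <;> ring
  have h := hx (fun n => (u n + v n) / 2) (fun n => (v n - u n) / 2) hlim2
    (Filter.Eventually.of_forall fun n => by rw [one_mul, hball]; exact hxuv n)
  rw [Set.indicator_of_mem hxab] at h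
  refine h.congr fun n => ?_
  have hn := huv n
  have r1 : ∫ t in Set.Ioc (u n) (v n), (Set.Ioc a b).indicator f t
      = ∫ t in Set.Ioc (u n) (v n), f t := by
    refine setIntegral_congr_fun measurableSet_Ioc (fun t ht => ?_)
    have hm : t ∈ Set.Ioc a b := ⟨(hau n).trans_lt ht.1, ht.2.trans (hvb n)⟩
    exact Set.indicator_of_mem hm f
  rw [hball, setAverage_eq, integral_Icc_eq_integral_Ioc, r1,
    ← intervalIntegral.integral_of_le hn.le, avg, smul_eq_mul, measureReal_def, Real.volume_Icc,
    ENNReal.toReal_ofReal (by linarith)]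
  field_simp

lemma lint_bound (ε δ : ℝ) (hε : 0 ≤ ε) (hεδ : ε < δ) (hδ : δ < 1) (a b : ℝ) (hab : a < b)
    (φ : ℝ → ℝ) (hφ : BMOe ε a b φ) :
    ∫⁻ t in Set.Ioc a b, ENNReal.ofReal (Real.exp (φ t)) ≤
      ENNReal.ofReal ((b - a) * Bel δ (avg φ a b) (avg (fun t => (φ t) ^ 2) a b)) := by
  have hδ0 : 0 < δ := by linarith
  have hpos : 0 < δ ^ 2 - ε ^ 2 := by nlinarith
  set σ := √(δ ^ 2 - ε ^ 2) with hσ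
  have hσ2 : σ ^ 2 = δ ^ 2 - ε ^ 2 := Real.sq_sqrt hpos.le
  set θ := (δ ^ 2 - ε ^ 2) / (2 * δ ^ 2) with hθ
  have hθ0 : 0 < θ := by positivity
  have hθe : θ * (2 * δ ^ 2) = δ ^ 2 - ε ^ 2 := by rw [hθ]; field_simp
  have hθ2 : θ ≤ 1 / 2 := by
    rw [hθ, div_le_iff₀ (by positivity)]
    nlinarith [sq_nonneg ε]
  have hθ3 : θ * ε ^ 2 ≤ (1 - θ) * σ ^ 2 := by rw [hσ2]; nlinarith
  choose g hgm hgi hg using fun n => exists_step ε δ θ σ φ hδ0.le hδ (Real.sqrt_nonneg _)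
    (by rw [hσ2]; ring) hθ0 hθ2 hθ3 n a b hab hφ
  have hpt : ∀ᵐ t ∂(volume.restrict (Set.Ioc a b)),
      Filter.liminf (fun n => g n t) Filter.atTop = ENNReal.ofReal (Real.exp (φ t)) := by
    rw [ae_restrict_iff' measurableSet_Ioc]
    filter_upwards [ae_avg_tendsto φ a b hab hφ.1,
      ae_avg_tendsto (fun t => (φ t) ^ 2) a b hab hφ.2.1] with t h1 h2 ht
    choose u v huv hu hv htuv hl hgt using fun n => hg n t ht
    have hlim : Filter.Tendsto (fun n => v n - u n) Filter.atTop (nhds 0) := by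
      have h0 := (tendsto_pow_atTop_nhds_zero_of_lt_one (r := 1 - θ) (by linarith)
        (by linarith)).mul_const (b - a)
      rw [zero_mul] at h0
      exact squeeze_zero (fun n => by linarith [huv n]) hl h0
    have k1 := h1 ht u v huv hu hv htuv hlim
    have k2 := h2 ht u v huv hu hv htuv hlim
    have k3 := ((Bel_cont δ).tendsto (φ t, (φ t) ^ 2)).comp (k1.prodMk_nhds k2)
    simp only [Bel_diag δ _ hδ0.le hδ] at k3
    refine Filter.Tendsto.liminf_eq ?_
    refine (ENNReal.tendsto_ofReal k3).congr fun n => ?_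
    rw [hgt n]
    rfl
  rw [← lintegral_congr_ae hpt]
  refine (lintegral_liminf_le hgm).trans ?_
  refine (Filter.liminf_le_liminf (Filter.Eventually.of_forall hgi)).trans ?_
  simp

/-- Integral-form John–Nirenberg inequality with the sharp constant
`e^{−ε}/(1−ε)` for `0 ≤ ε < 1`. -/
theorem stmt0 (ε : ℝ) (hε0 : 0 ≤ ε) (hε1 : ε < 1) (a b : ℝ) (hab : a < b)
    (φ : ℝ → ℝ) (hφ : BMOe ε a b φ) :
    IntervalIntegrable (fun t => Real.exp (φ t)) volume a b ∧
    avg (fun t => Real.exp (φ t)) a b ≤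
      (Real.exp (-ε) / (1 - ε)) * Real.exp (avg φ a b) := by
  have hpos : 0 < b - a := by linarith
  have hmeas : AEStronglyMeasurable (fun t => Real.exp (φ t)) (volume.restrict (Set.Ioc a b)) :=
    Real.continuous_exp.comp_aestronglyMeasurable hφ.1.1.aestronglyMeasurable
  have hnn : 0 ≤ᵐ[volume.restrict (Set.Ioc a b)] (fun t => Real.exp (φ t)) :=
    Filter.Eventually.of_forall fun t => (Real.exp_pos _).le
  have hint : IntervalIntegrable (fun t => Real.exp (φ t)) volume a b := by
    rw [intervalIntegrable_iff_integrableOn_Ioc_of_le hab.le]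
    refine ⟨hmeas, ?_⟩
    rw [hasFiniteIntegral_iff_ofReal hnn]
    exact (lint_bound ε ((ε + 1) / 2) hε0 (by linarith) (by linarith) a b hab φ hφ).trans_lt
      ENNReal.ofReal_lt_top
  refine ⟨hint, ?_⟩
  have hδ : ∀ δ ∈ Set.Ioo ε 1, avg (fun t => Real.exp (φ t)) a b ≤
      (Real.exp (-δ) / (1 - δ)) * Real.exp (avg φ a b) := by
    intro δ hδ
    refine le_trans ?_ (Bel_upper δ (avg φ a b) (avg (fun t => (φ t) ^ 2) a b) hδ.2)
    have h := lint_bound ε δ hε0 hδ.1 hδ.2 a b hab φ hφ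
    have hB := Bel_nonneg δ _ _ (hε0.trans hδ.1.le) hδ.2 (avg_sq_le φ a b hab hφ.1 hφ.2.1)
    unfold avg
    rw [div_le_iff₀ hpos, mul_comm, intervalIntegral.integral_of_le hab.le,
      integral_eq_lintegral_of_nonneg_ae hnn hmeas]
    exact ENNReal.toReal_le_of_le_ofReal (mul_nonneg hpos.le hB) h
  have hc : Filter.Tendsto (fun δ => (Real.exp (-δ) / (1 - δ)) * Real.exp (avg φ a b))
      (nhdsWithin ε (Set.Ioi ε)) (nhds ((Real.exp (-ε) / (1 - ε)) * Real.exp (avg φ a b))) := by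
    have : ContinuousAt (fun δ : ℝ => (Real.exp (-δ) / (1 - δ)) * Real.exp (avg φ a b)) ε := by
      have h1 : 1 - ε ≠ 0 := by linarith
      fun_prop (disch := exact h1)
    exact this.tendsto.mono_left nhdsWithin_le_nhds
  refine ge_of_tendsto hc ?_
  filter_upwards [Ioo_mem_nhdsGT hε1] with δ h using hδ δ h
end

section
/- Let 0 ≤ ε < √2·log 2. Then for every φ ∈ BMO^d_ε([0,1]), the function e^φ is integrable on [0,1] and ∫₀¹ e^φ ≤ (e^{−ε/√2}/(2 − e^{ε/√2}))·e^{∫₀¹ φ}. -/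
open MeasureTheory Real

/-- `φ ∈ BMO^d_ε([0,1])`: `φ` and `φ²` are integrable on `[0,1]` and the mean
oscillation is at most `ε²` on every dyadic subinterval
`[k/2^n, (k+1)/2^n]` of `[0,1]`. -/
def BMOd (ε : ℝ) (φ : ℝ → ℝ) : Prop :=
  IntervalIntegrable φ volume 0 1 ∧
  IntervalIntegrable (fun t => (φ t) ^ 2) volume 0 1 ∧
  ∀ n k : ℕ, k < 2 ^ n →
    avg (fun t => (φ t) ^ 2) ((k : ℝ) / 2 ^ n) (((k : ℝ) + 1) / 2 ^ n)
      - (avg φ ((k : ℝ) / 2 ^ n) (((k : ℝ) + 1) / 2 ^ n)) ^ 2 ≤ ε ^ 2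


/-- The profile function `ψ(s) = e^s (1 - s)`. -/
noncomputable def psi (s : ℝ) : ℝ := Real.exp s * (1 - s)

lemma psi_hasDeriv (s : ℝ) : HasDerivAt psi (-s * Real.exp s) s := by
  have := (Real.hasDerivAt_exp s).mul ((hasDerivAt_id s).const_sub 1)
  refine HasDerivAt.congr_deriv this ?_
  simp; ring

lemma psi_cont : Continuous psi := by
  unfold psi; fun_prop

lemma psi_anti {x y : ℝ} (hx : 0 ≤ x) (hxy : x ≤ y) : psi y ≤ psi x := by
  have : AntitoneOn psi (Set.Ici 0) := by
    apply antitoneOn_of_deriv_nonpos (convex_Ici 0) psi_cont.continuousOn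
    · intro z _
      exact (psi_hasDeriv z).differentiableAt.differentiableWithinAt
    · intro z hz
      rw [interior_Ici] at hz
      rw [(psi_hasDeriv z).deriv]
      have : 0 < z := hz
      nlinarith [Real.exp_pos z]
  exact this hx (hx.trans hxy) hxy

lemma psi_mono {x y : ℝ} (hy : y ≤ 0) (hxy : x ≤ y) : psi x ≤ psi y := by
  have : MonotoneOn psi (Set.Iic 0) := by
    apply monotoneOn_of_deriv_nonneg (convex_Iic 0) psi_cont.continuousOn
    · intro z _
      exact (psi_hasDeriv z).differentiableAt.differentiableWithinAt
    · intro z hz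
      rw [interior_Iic] at hz
      rw [(psi_hasDeriv z).deriv]
      have : z < 0 := hz
      nlinarith [Real.exp_pos z]
  exact this (hxy.trans hy) hy hxy

lemma psi_sqrt_hasDeriv {t : ℝ} (ht : 0 < t) :
    HasDerivAt (fun t => psi (√t)) (-(Real.exp (√t) / 2)) t := by
  have h := (psi_hasDeriv (√t)).comp t (Real.hasDerivAt_sqrt ht.ne')
  refine HasDerivAt.congr_deriv h ?_
  have : 0 < √t := Real.sqrt_pos.2 ht
  field_simp

lemma lemA {p τ : ℝ} (hp : 0 ≤ p) (h : -p ≤ τ) :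
    psi p ≤ Real.exp τ * (1 - τ + (τ ^ 2 - p ^ 2) / 2) := by
  set H : ℝ → ℝ := fun τ => Real.exp τ * (1 - τ + (τ ^ 2 - p ^ 2) / 2) with hH
  have hd : ∀ t, HasDerivAt H (Real.exp t * ((t ^ 2 - p ^ 2) / 2)) t := by
    intro t
    have := (Real.hasDerivAt_exp t).mul (((hasDerivAt_id t).const_sub 1).add
      (((hasDerivAt_pow 2 t).sub_const (p ^ 2)).div_const 2))
    refine HasDerivAt.congr_deriv this ?_
    simp; ring
  have hc : Continuous H := by rw [hH]; fun_prop
  have hp0 : H p = psi p := by simp [hH, psi]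
  rw [← hp0]
  change H p ≤ H τ
  rcases le_total p τ with h1 | h1
  · have : MonotoneOn H (Set.Ici p) := by
      apply monotoneOn_of_deriv_nonneg (convex_Ici p) hc.continuousOn
      · intro z _
        exact (hd z).differentiableAt.differentiableWithinAt
      · intro z hz
        rw [interior_Ici] at hz
        have hz : p < z := hz
        rw [(hd z).deriv]
        have := Real.exp_pos z
        have : 0 ≤ (z ^ 2 - p ^ 2) / 2 := by nlinarith
        positivity
    exact this Set.self_mem_Ici h1 h1
  · have : AntitoneOn H (Set.Icc (-p) p) := by
      apply antitoneOn_of_deriv_nonpos (convex_Icc _ p) hc.continuousOn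
      · intro z _
        exact (hd z).differentiableAt.differentiableWithinAt
      · intro z hz
        rw [interior_Icc] at hz
        rw [(hd z).deriv]
        have := Real.exp_pos z
        have : (z ^ 2 - p ^ 2) / 2 ≤ 0 := by nlinarith [hz.1, hz.2]
        exact mul_nonpos_of_nonneg_of_nonpos (Real.exp_pos z).le this
    exact this ⟨h, h1⟩ ⟨by linarith, le_rfl⟩ h1

lemma key_good {p q m a : ℝ} (hp : 0 ≤ p) (hq : 0 ≤ q) (hm : 0 ≤ m) (ha : 0 ≤ a)
    (h : p ^ 2 + q ^ 2 = 2 * m ^ 2 + 2 * a ^ 2) (hg : a ≤ m + p) :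
    Real.exp a * psi p + Real.exp (-a) * psi q ≤ 2 * psi m := by
  have h1 := mul_le_mul_of_nonneg_left (lemA (p := p) (τ := m - a) hp (by linarith))
    (Real.exp_pos a).le
  have h2 := mul_le_mul_of_nonneg_left (lemA (p := q) (τ := m + a) hq (by linarith))
    (Real.exp_pos (-a)).le
  rw [← mul_assoc, ← Real.exp_add] at h1 h2
  have e1 : a + (m - a) = m := by ring
  have e2 : -a + (m + a) = m := by ring
  rw [e1] at h1
  rw [e2] at h2
  have h3 : Real.exp m * (1 - (m - a) + ((m - a) ^ 2 - p ^ 2) / 2)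
      + Real.exp m * (1 - (m + a) + ((m + a) ^ 2 - q ^ 2) / 2) = 2 * psi m := by
    unfold psi
    linear_combination (-Real.exp m / 2) * h
  linarith

lemma step1 {η p q m a a0 : ℝ} (hη : 0 ≤ η) (hp : η ≤ p) (hq : 0 ≤ q) (hm : 0 ≤ m)
    (h : p ^ 2 + q ^ 2 = 2 * m ^ 2 + 2 * a ^ 2)
    (h0 : η ^ 2 + q ^ 2 = 2 * m ^ 2 + 2 * a0 ^ 2) (hm0 : m ≤ a0) (ha : 0 ≤ a) :
    Real.exp a * psi p + Real.exp (-a) * psi q ≤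
      Real.exp a0 * psi η + Real.exp (-a0) * psi q := by
  have haa : a0 ≤ a := by nlinarith
  set G : ℝ → ℝ := fun b => Real.exp b * psi (√(2 * m ^ 2 + 2 * b ^ 2 - q ^ 2))
    + Real.exp (-b) * psi q with hG
  have e1 : G a = Real.exp a * psi p + Real.exp (-a) * psi q := by
    have : √(2 * m ^ 2 + 2 * a ^ 2 - q ^ 2) = p := by
      rw [← h]; simp [hη.trans hp]
    simp only [hG, this]
  have e0 : G a0 = Real.exp a0 * psi η + Real.exp (-a0) * psi q := by
    have : √(2 * m ^ 2 + 2 * a0 ^ 2 - q ^ 2) = η := by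
      rw [← h0]; simp [hη]
    simp only [hG, this]
  rw [← e1, ← e0]
  have hd : ∀ b, a0 < b → HasDerivAt G (Real.exp (-b) *
      (psi (√(2 * m ^ 2 + 2 * b ^ 2 - q ^ 2) + 2 * b) - psi q)) b := by
    intro b hb
    have hpos : 0 < 2 * m ^ 2 + 2 * b ^ 2 - q ^ 2 := by nlinarith
    have hin : HasDerivAt (fun b : ℝ => 2 * m ^ 2 + 2 * b ^ 2 - q ^ 2) (4 * b) b := by
      have := (((hasDerivAt_pow 2 b).const_mul 2).const_add (2 * m ^ 2)).sub_const (q ^ 2)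
      refine HasDerivAt.congr_deriv this ?_
      simp; ring
    have h2 := (psi_sqrt_hasDeriv hpos).comp b hin
    have h3 := ((Real.hasDerivAt_exp b).mul h2).add
      (((Real.hasDerivAt_exp (-b)).comp b (hasDerivAt_neg b)).mul_const (psi q))
    refine HasDerivAt.congr_deriv h3 ?_
    simp only [Function.comp]
    set r := √(2 * m ^ 2 + 2 * b ^ 2 - q ^ 2)
    have x1 : Real.exp (-b) * psi (r + 2 * b) = Real.exp b * (Real.exp r * (1 - r - 2 * b)) := by
      unfold psi
      have : Real.exp (r + 2 * b) = Real.exp r * (Real.exp b * Real.exp b) := by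
        rw [← Real.exp_add, ← Real.exp_add]; ring_nf
      rw [this, Real.exp_neg]
      field_simp
      ring
    rw [mul_sub, x1]
    unfold psi
    ring
  have : AntitoneOn G (Set.Icc a0 a) := by
    apply antitoneOn_of_deriv_nonpos (convex_Icc _ _)
    · have : Continuous G := by
        have := psi_cont
        rw [hG]; fun_prop
      exact this.continuousOn
    · intro z hz
      rw [interior_Icc] at hz
      exact (hd z hz.1).differentiableAt.differentiableWithinAt
    · intro z hz
      rw [interior_Icc] at hz
      rw [(hd z hz.1).deriv]
      refine mul_nonpos_of_nonneg_of_nonpos (Real.exp_pos _).le ?_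
      have hz1 := hz.1
      have hr := Real.sqrt_nonneg (2 * m ^ 2 + 2 * z ^ 2 - q ^ 2)
      have hr2 := Real.sq_sqrt (show 0 ≤ 2 * m ^ 2 + 2 * z ^ 2 - q ^ 2 by nlinarith)
      set r := √(2 * m ^ 2 + 2 * z ^ 2 - q ^ 2)
      have hz0 : 0 ≤ z := by linarith
      have : q ≤ r + 2 * z := by
        apply abs_le_of_sq_le_sq' _ (by linarith) |>.2
        nlinarith [mul_nonneg hr hz0]
      linarith [psi_anti hq this]
  exact this ⟨le_rfl, haa⟩ ⟨haa, le_rfl⟩ haa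

lemma step2 {η q q1 m a : ℝ} (hη : 0 ≤ η) (hm : η ≤ m) (ha : m + η ≤ a)
    (hq : 0 ≤ q) (hq1 : 0 ≤ q1)
    (h : η ^ 2 + q ^ 2 = 2 * m ^ 2 + 2 * a ^ 2) (h1 : q1 ^ 2 = η ^ 2 + 2 * a ^ 2) :
    2 * psi η - Real.exp (-a) * psi q1 ≤ 2 * psi m - Real.exp (-a) * psi q := by
  set G : ℝ → ℝ := fun b => 2 * psi b
    - Real.exp (-a) * psi (√(2 * b ^ 2 + 2 * a ^ 2 - η ^ 2)) with hG
  have e1 : G m = 2 * psi m - Real.exp (-a) * psi q := by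
    have : √(2 * m ^ 2 + 2 * a ^ 2 - η ^ 2) = q := by
      rw [← h]; simp [hq]
    simp only [hG, this]
  have e0 : G η = 2 * psi η - Real.exp (-a) * psi q1 := by
    have : √(2 * η ^ 2 + 2 * a ^ 2 - η ^ 2) = q1 := by
      rw [← Real.sqrt_sq hq1, h1]; congr 1; ring
    simp only [hG, this]
  rw [← e1, ← e0]
  have hpos : ∀ b, η < b → 0 < 2 * b ^ 2 + 2 * a ^ 2 - η ^ 2 := by
    intro b hb
    nlinarith [sq_nonneg a]
  have hd : ∀ b, η < b → HasDerivAt G (2 * b * (Real.exp (-a) *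
      Real.exp (√(2 * b ^ 2 + 2 * a ^ 2 - η ^ 2)) - Real.exp b)) b := by
    intro b hb
    have hin : HasDerivAt (fun b : ℝ => 2 * b ^ 2 + 2 * a ^ 2 - η ^ 2) (4 * b) b := by
      have := (((hasDerivAt_pow 2 b).const_mul 2).add_const (2 * a ^ 2)).sub_const (η ^ 2)
      refine HasDerivAt.congr_deriv this ?_
      simp; ring
    have h2 := (psi_sqrt_hasDeriv (hpos b hb)).comp b hin
    have h3 := ((psi_hasDeriv b).const_mul 2).sub (h2.const_mul (Real.exp (-a)))
    refine HasDerivAt.congr_deriv h3 ?_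
    ring
  have : MonotoneOn G (Set.Icc η m) := by
    apply monotoneOn_of_deriv_nonneg (convex_Icc _ _)
    · have : Continuous G := by
        have := psi_cont
        rw [hG]; fun_prop
      exact this.continuousOn
    · intro z hz
      rw [interior_Icc] at hz
      exact (hd z hz.1).differentiableAt.differentiableWithinAt
    · intro z hz
      rw [interior_Icc] at hz
      rw [(hd z hz.1).deriv]
      have hz1 := hz.1
      have hz2 := hz.2
      refine mul_nonneg (by linarith) ?_
      rw [← Real.exp_add, sub_nonneg, Real.exp_le_exp]
      have : a + z ≤ √(2 * z ^ 2 + 2 * a ^ 2 - η ^ 2) := by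
        apply Real.le_sqrt_of_sq_le
        nlinarith
      linarith
  exact this ⟨le_rfl, hm⟩ ⟨hm, le_rfl⟩ hm

lemma step3 {η α a δ : ℝ} (hη : 0 ≤ η) (ha : 2 * η ≤ a) (haα : a ≤ α)
    (hδ : 0 ≤ δ) (hδα : δ ^ 2 = η ^ 2 + 2 * α ^ 2)
    (hC : (2 - Real.exp α) * psi η = Real.exp (-α) * psi δ) :
    Real.exp (-a) * psi (√(η ^ 2 + 2 * a ^ 2)) ≤ (2 - Real.exp a) * psi η := by
  set G : ℝ → ℝ := fun b => (2 - Real.exp b) * psi η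
    - Real.exp (-b) * psi (√(η ^ 2 + 2 * b ^ 2)) with hG
  suffices 0 ≤ G a by simp only [hG] at this; linarith
  have e1 : G α = 0 := by
    have : √(η ^ 2 + 2 * α ^ 2) = δ := by rw [← hδα]; simp [hδ]
    simp only [hG, this]; linarith
  have e0 : 0 ≤ G (2 * η) := by
    have : √(η ^ 2 + 2 * (2 * η) ^ 2) = 3 * η := by
      rw [← Real.sqrt_sq (show 0 ≤ 3 * η by linarith)]; congr 1; ring
    simp only [hG, this]
    have := key_good (p := η) (q := 3 * η) (m := η) (a := 2 * η) hη (by linarith) hη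
      (by linarith) (by ring) (by linarith)
    linarith
  have hd : ∀ b, 2 * η < b → HasDerivAt G (Real.exp b *
      (psi (√(η ^ 2 + 2 * b ^ 2) - 2 * b) - psi η)) b := by
    intro b hb
    have hpos : 0 < η ^ 2 + 2 * b ^ 2 := by nlinarith
    have hin : HasDerivAt (fun b : ℝ => η ^ 2 + 2 * b ^ 2) (4 * b) b := by
      have := (((hasDerivAt_pow 2 b).const_mul 2).const_add (η ^ 2))
      refine HasDerivAt.congr_deriv this ?_
      simp; ring
    have h2 := (psi_sqrt_hasDeriv hpos).comp b hin
    have h3 := (((Real.hasDerivAt_exp b).const_sub 2).mul_const (psi η)).sub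
      (((Real.hasDerivAt_exp (-b)).comp b (hasDerivAt_neg b)).mul h2)
    refine HasDerivAt.congr_deriv h3 ?_
    simp only [Function.comp]
    set r := √(η ^ 2 + 2 * b ^ 2)
    have x1 : Real.exp b * psi (r - 2 * b) = Real.exp (-b) * (Real.exp r * (1 - r + 2 * b)) := by
      unfold psi
      have : Real.exp (r - 2 * b) = Real.exp r * (Real.exp (-b) * Real.exp (-b)) := by
        rw [← Real.exp_add, ← Real.exp_add]; ring_nf
      rw [this, Real.exp_neg]
      field_simp
      ring
    rw [mul_sub, x1]
    unfold psi
    ring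
  have hs : ∀ b c, 2 * η ≤ b → b ≤ c →
      √(η ^ 2 + 2 * c ^ 2) - 2 * c ≤ √(η ^ 2 + 2 * b ^ 2) - 2 * b := by
    intro b c hb hbc
    have hr := Real.sq_sqrt (show 0 ≤ η ^ 2 + 2 * b ^ 2 by positivity)
    have hb0 : 0 ≤ b := by linarith
    have hr1 : b ≤ √(η ^ 2 + 2 * b ^ 2) := Real.le_sqrt_of_sq_le (by nlinarith)
    set r := √(η ^ 2 + 2 * b ^ 2)
    have : √(η ^ 2 + 2 * c ^ 2) ≤ r + 2 * (c - b) := by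
      apply Real.sqrt_le_iff.2 ⟨by linarith, ?_⟩
      nlinarith [mul_nonneg (sub_nonneg.2 hbc) (sub_nonneg.2 hbc),
        mul_nonneg (sub_nonneg.2 hbc) (sub_nonneg.2 hr1)]
    linarith
  have hs0 : ∀ b, 2 * η ≤ b → √(η ^ 2 + 2 * b ^ 2) - 2 * b ≤ 0 := by
    intro b hb
    have := hs (2 * η) b le_rfl hb
    have h3 : √(η ^ 2 + 2 * (2 * η) ^ 2) = 3 * η := by
      rw [← Real.sqrt_sq (show 0 ≤ 3 * η by linarith)]; congr 1; ring
    rw [h3] at this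
    linarith
  have hcont : Continuous G := by
    have := psi_cont
    rw [hG]; fun_prop
  rcases le_total (psi η) (psi (√(η ^ 2 + 2 * a ^ 2) - 2 * a)) with hc | hc
  · have : MonotoneOn G (Set.Icc (2 * η) a) := by
      apply monotoneOn_of_deriv_nonneg (convex_Icc _ _) hcont.continuousOn
      · intro z hz
        rw [interior_Icc] at hz
        exact (hd z hz.1).differentiableAt.differentiableWithinAt
      · intro z hz
        rw [interior_Icc] at hz
        rw [(hd z hz.1).deriv]
        refine mul_nonneg (Real.exp_pos _).le ?_
        have := psi_mono (hs0 z hz.1.le) (hs z a hz.1.le hz.2.le)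
        linarith
    exact e0.trans (this ⟨le_rfl, ha⟩ ⟨ha, le_rfl⟩ ha)
  · have : AntitoneOn G (Set.Icc a α) := by
      apply antitoneOn_of_deriv_nonpos (convex_Icc _ _) hcont.continuousOn
      · intro z hz
        rw [interior_Icc] at hz
        exact (hd z (ha.trans_lt hz.1)).differentiableAt.differentiableWithinAt
      · intro z hz
        rw [interior_Icc] at hz
        rw [(hd z (ha.trans_lt hz.1)).deriv]
        refine mul_nonpos_of_nonneg_of_nonpos (Real.exp_pos _).le ?_
        have := psi_mono (hs0 a ha) (hs a z ha hz.1.le)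
        linarith
    rw [← e1]
    exact this ⟨le_rfl, haα⟩ ⟨haα, le_rfl⟩ haα

lemma key {η α δ p q m a : ℝ} (hη : 0 ≤ η) (hδ : 0 ≤ δ) (hα : 0 ≤ α)
    (hδα : δ ^ 2 = η ^ 2 + 2 * α ^ 2)
    (hC : (2 - Real.exp α) * psi η = Real.exp (-α) * psi δ)
    (hp : η ≤ p) (hq : η ≤ q) (hm : η ≤ m) (hqδ : q ≤ δ) (ha : 0 ≤ a)
    (h : p ^ 2 + q ^ 2 = 2 * m ^ 2 + 2 * a ^ 2) :
    Real.exp a * psi p + Real.exp (-a) * psi q ≤ 2 * psi m := by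
  rcases le_total a (m + p) with hg | hb
  · exact key_good (hη.trans hp) (hη.trans hq) (hη.trans hm) ha h hg
  have hq0 := hη.trans hq
  have hm0 := hη.trans hm
  have hp0 := hη.trans hp
  have hqa : a + m ≤ q := by
    apply abs_le_of_sq_le_sq' _ hq0 |>.2
    nlinarith
  obtain ⟨a0, ha00, h0⟩ : ∃ a0 : ℝ, 0 ≤ a0 ∧ a0 ^ 2 = (η ^ 2 + q ^ 2 - 2 * m ^ 2) / 2 :=
    ⟨√((η ^ 2 + q ^ 2 - 2 * m ^ 2) / 2), Real.sqrt_nonneg _, Real.sq_sqrt (by nlinarith)⟩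
  have hma : m ≤ a0 := by
    apply abs_le_of_sq_le_sq' _ ha00 |>.2
    nlinarith
  have haa : a0 ≤ a := by
    apply abs_le_of_sq_le_sq' _ ha |>.2
    nlinarith
  have s1 := step1 hη hp hq0 hm0 h (by linarith) hma ha
  have hmη : m + η ≤ a0 := by
    have : η ≤ a0 - m := by
      apply abs_le_of_sq_le_sq' _ (by linarith) |>.2
      nlinarith
    linarith
  have s2 := step2 (q1 := √(η ^ 2 + 2 * a0 ^ 2)) hη hm hmη hq0 (Real.sqrt_nonneg _)
    (by linarith) (Real.sq_sqrt (by positivity))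
  have haα : a0 ≤ α := by
    apply abs_le_of_sq_le_sq' _ hα |>.2
    nlinarith
  have s3 := step3 hη (by linarith) haα hδ hδα hC
  linarith

lemma exists_delta {α : ℝ} (h0 : 0 ≤ α) (h1 : α < Real.log 2) :
    ∃ η δ : ℝ, 0 ≤ η ∧ 0 ≤ δ ∧ δ ^ 2 = η ^ 2 + 2 * α ^ 2 ∧
      (2 - Real.exp α) * psi η = Real.exp (-α) * psi δ ∧ 0 < psi δ := by
  have hs2 : √2 ^ 2 = 2 := Real.sq_sqrt (by norm_num)
  have hs0 : 0 ≤ √2 := Real.sqrt_nonneg _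
  have hea : Real.exp α < 2 := by
    rw [← Real.exp_log (show (0:ℝ) < 2 by norm_num)]
    exact Real.exp_lt_exp.2 h1
  rcases h0.eq_or_lt with rfl | hpos
  · exact ⟨0, 0, le_rfl, le_rfl, by simp, by simp [psi]; norm_num, by simp [psi]⟩
  have hle : √2 * α ≤ 1 := by
    apply abs_le_of_sq_le_sq' _ (by norm_num) |>.2
    rw [mul_pow, hs2]
    have := Real.log_two_lt_d9
    nlinarith
  set f : ℝ → ℝ := fun d => (2 - Real.exp α) * psi (√(d ^ 2 - 2 * α ^ 2))
    - Real.exp (-α) * psi d with hf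
  have hfc : Continuous f := by
    have := psi_cont
    rw [hf]; fun_prop
  have hf1 : 0 ≤ f 1 := by
    have : psi 1 = 0 := by simp [psi]
    simp only [hf, this]
    have hr : √(1 ^ 2 - 2 * α ^ 2) ≤ 1 := Real.sqrt_le_one.2 (by nlinarith)
    have : 0 ≤ psi (√(1 ^ 2 - 2 * α ^ 2)) := mul_nonneg (Real.exp_pos _).le (by linarith)
    nlinarith
  have hf0 : f (√2 * α) ≤ 0 := by
    have e : (√2 * α) ^ 2 - 2 * α ^ 2 = 0 := by rw [mul_pow, hs2]; ring
    have e0 : psi 0 = 1 := by simp [psi]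
    simp only [hf, e, Real.sqrt_zero, e0]
    -- (2 - e^a) e^a ≤ psi (√2 a)
    set G : ℝ → ℝ := fun b => psi (√2 * b) - (2 - Real.exp b) * Real.exp b with hG
    have hd : ∀ b, HasDerivAt G (-(2 * b) * Real.exp (√2 * b)
        + 2 * (Real.exp b * Real.exp b - Real.exp b)) b := by
      intro b
      have h2 := (psi_hasDeriv (√2 * b)).comp b ((hasDerivAt_id b).const_mul (√2))
      have h3 := h2.sub (((Real.hasDerivAt_exp b).const_sub 2).mul (Real.hasDerivAt_exp b))
      refine HasDerivAt.congr_deriv h3 ?_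
      simp only [mul_one]
      linear_combination (-b * Real.exp (√2 * b)) * hs2
    have hmon : MonotoneOn G (Set.Ici 0) := by
      apply monotoneOn_of_deriv_nonneg (convex_Ici 0)
      · have := psi_cont
        have : Continuous G := by rw [hG]; fun_prop
        exact this.continuousOn
      · intro z _
        exact (hd z).differentiableAt.differentiableWithinAt
      · intro z hz
        rw [interior_Ici] at hz
        have hz : 0 < z := hz
        rw [(hd z).deriv]
        have hsh : z / 2 ≤ Real.sinh (z / 2) := Real.self_le_sinh_iff.2 (by linarith)
        rw [Real.sinh_eq] at hsh
        have x1 : Real.exp z * Real.exp z - Real.exp z =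
            Real.exp (3 / 2 * z) * (Real.exp (z / 2) - Real.exp (-(z / 2))) := by
          rw [mul_sub, ← Real.exp_add, ← Real.exp_add, ← Real.exp_add]
          ring_nf
        have x2 : Real.exp (√2 * z) ≤ Real.exp (3 / 2 * z) := by
          apply Real.exp_le_exp.2
          have : √2 ≤ 3 / 2 := Real.sqrt_le_iff.2 ⟨by norm_num, by norm_num⟩
          nlinarith
        rw [x1]
        have x3 : z * Real.exp (√2 * z) ≤ z * Real.exp (3 / 2 * z) := by gcongr
        have x4 := mul_le_mul_of_nonneg_left (show z ≤ Real.exp (z / 2) - Real.exp (-(z / 2)) by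
          linarith) (Real.exp_pos (3 / 2 * z)).le
        linarith
    have := hmon (Set.self_mem_Ici) (show α ∈ Set.Ici 0 from h0) h0
    have g0 : G 0 = 0 := by simp [hG, psi]; norm_num
    rw [g0] at this
    simp only [hG] at this
    have hh := mul_le_mul_of_nonneg_left this (Real.exp_pos (-α)).le
    have hi : Real.exp (-α) * Real.exp α = 1 := by rw [← Real.exp_add]; simp
    have : Real.exp (-α) * (psi (√2 * α) - (2 - Real.exp α) * Real.exp α)
      = Real.exp (-α) * psi (√2 * α) - (2 - Real.exp α) := by
      linear_combination (-(2 - Real.exp α)) * hi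
    linarith
  obtain ⟨d, hd, hd0⟩ := intermediate_value_Icc hle hfc.continuousOn ⟨hf0, hf1⟩
  have hdn : 0 ≤ d := le_trans (by positivity) hd.1
  have hr : 0 ≤ d ^ 2 - 2 * α ^ 2 := by
    have : (√2 * α) ^ 2 ≤ d ^ 2 := by
      have := hd.1
      gcongr
    rw [mul_pow, hs2] at this
    linarith
  refine ⟨√(d ^ 2 - 2 * α ^ 2), d, Real.sqrt_nonneg _, hdn, ?_, ?_, ?_⟩
  · rw [Real.sq_sqrt hr]; ring
  · simp only [hf] at hd0; linarith
  · have hd1 : d < 1 := by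
      rcases hd.2.eq_or_lt with rfl | h
      · exfalso
        have : psi 1 = 0 := by simp [psi]
        simp only [hf, this] at hd0
        have hr : √(1 ^ 2 - 2 * α ^ 2) < 1 := by
          rw [Real.sqrt_lt' one_pos]; nlinarith
        have : 0 < psi (√(1 ^ 2 - 2 * α ^ 2)) := mul_pos (Real.exp_pos _) (by linarith)
        have := mul_pos (sub_pos.2 hea) this
        linarith
      · exact h
    exact mul_pos (Real.exp_pos _) (by linarith)

lemma bell_step {η α δ ε I1 I2 V1 V2 I V : ℝ} (hη : 0 ≤ η) (hδ : 0 ≤ δ) (hα : 0 ≤ α)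
    (hδα : δ ^ 2 = η ^ 2 + 2 * α ^ 2) (hε : ε ^ 2 = 2 * α ^ 2)
    (hC : (2 - Real.exp α) * psi η = Real.exp (-α) * psi δ)
    (h1 : 0 ≤ V1) (h1' : V1 ≤ ε ^ 2) (h2 : 0 ≤ V2) (h2' : V2 ≤ ε ^ 2) (hV' : V ≤ ε ^ 2)
    (hI : I = (I1 + I2) / 2) (hV : V = (V1 + V2) / 2 + ((I1 - I2) / 2) ^ 2) :
    Real.exp I1 * psi (√(δ ^ 2 - V1)) + Real.exp I2 * psi (√(δ ^ 2 - V2)) ≤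
      2 * (Real.exp I * psi (√(δ ^ 2 - V))) := by
  wlog hle : I2 ≤ I1 generalizing I1 I2 V1 V2
  · have := this (I1 := I2) (I2 := I1) (V1 := V2) (V2 := V1) h2 h2' h1 h1'
      (by rw [hI]; ring) (by rw [hV]; ring) (by linarith)
    linarith
  have hlow : ∀ v, v ≤ ε ^ 2 → η ≤ √(δ ^ 2 - v) := fun v hv =>
    Real.le_sqrt_of_sq_le (by linarith)
  have hsq : ∀ v, v ≤ ε ^ 2 → √(δ ^ 2 - v) ^ 2 = δ ^ 2 - v := fun v hv =>
    Real.sq_sqrt (by nlinarith)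
  have hk := key (a := (I1 - I2) / 2) hη hδ hα hδα hC (hlow V1 h1') (hlow V2 h2') (hlow V hV')
    (Real.sqrt_le_iff.2 ⟨hδ, by linarith⟩) (by linarith)
    (by rw [hsq V1 h1', hsq V2 h2', hsq V hV', hV]; ring)
  have hk2 := mul_le_mul_of_nonneg_left hk (Real.exp_pos I).le
  have e1 : Real.exp I1 = Real.exp I * Real.exp ((I1 - I2) / 2) := by
    rw [← Real.exp_add, hI]; ring_nf
  have e2 : Real.exp I2 = Real.exp I * Real.exp (-((I1 - I2) / 2)) := by
    rw [← Real.exp_add, hI]; ring_nf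
  rw [e1, e2]
  linarith

lemma sum_range_two_mul' (f : ℕ → ℝ) (N : ℕ) :
    ∑ k ∈ Finset.range (2 * N), f k = ∑ k ∈ Finset.range N, (f (2 * k) + f (2 * k + 1)) := by
  induction N with
  | zero => simp
  | succ N ih =>
    rw [show 2 * (N + 1) = 2 * N + 1 + 1 by ring, Finset.sum_range_succ, Finset.sum_range_succ, ih,
      Finset.sum_range_succ]
    ring

/-- Average over a dyadic interval. -/
noncomputable def davg (φ : ℝ → ℝ) (n k : ℕ) : ℝ :=
  avg φ ((k : ℝ) / 2 ^ n) (((k : ℝ) + 1) / 2 ^ n)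

lemma dy_bounds {n k : ℕ} (hk : k < 2 ^ n) :
    (0:ℝ) ≤ (k : ℝ) / 2 ^ n ∧ (k : ℝ) / 2 ^ n < ((k : ℝ) + 1) / 2 ^ n ∧
      ((k : ℝ) + 1) / 2 ^ n ≤ 1 := by
  refine ⟨by positivity, by gcongr; linarith, ?_⟩
  rw [div_le_one (by positivity)]
  exact_mod_cast hk

lemma dy_int {φ : ℝ → ℝ} (h : IntervalIntegrable φ volume 0 1) {a b : ℝ}
    (ha : 0 ≤ a) (hab : a ≤ b) (hb : b ≤ 1) : IntervalIntegrable φ volume a b := by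
  apply h.mono_set
  rw [Set.uIcc_of_le hab, Set.uIcc_of_le zero_le_one]
  exact Set.Icc_subset_Icc ha hb

lemma davg_split {φ : ℝ → ℝ} (h : IntervalIntegrable φ volume 0 1) {n k : ℕ} (hk : k < 2 ^ n) :
    davg φ n k = (davg φ (n + 1) (2 * k) + davg φ (n + 1) (2 * k + 1)) / 2 := by
  have hk1 : 2 * k < 2 ^ (n + 1) := by rw [pow_succ]; omega
  have hk2 : 2 * k + 1 < 2 ^ (n + 1) := by rw [pow_succ]; omega
  have b1 := dy_bounds hk1
  have b2 := dy_bounds hk2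
  have i1 := dy_int h b1.1 b1.2.1.le b1.2.2
  have i2 := dy_int h b2.1 b2.2.1.le b2.2.2
  have e1 : ((2 * k : ℕ) : ℝ) / 2 ^ (n + 1) = (k : ℝ) / 2 ^ n := by
    push_cast; rw [pow_succ]; field_simp
  have e2 : (((2 * k + 1 : ℕ) : ℝ) + 1) / 2 ^ (n + 1) = ((k : ℝ) + 1) / 2 ^ n := by
    push_cast; rw [pow_succ]; field_simp; ring
  have e3 : ((2 * k + 1 : ℕ) : ℝ) / 2 ^ (n + 1) = (((2 * k : ℕ) : ℝ) + 1) / 2 ^ (n + 1) := by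
    push_cast; ring
  rw [e3] at i2
  have hadd := intervalIntegral.integral_add_adjacent_intervals i1 i2
  unfold davg avg
  rw [e3]
  rw [e1, e2] at hadd ⊢
  rw [← hadd]
  have d0 : ((k : ℝ) + 1) / 2 ^ n - (k : ℝ) / 2 ^ n = 1 / 2 ^ n := by ring
  have d1 : (((2 * k : ℕ) : ℝ) + 1) / 2 ^ (n + 1) - (k : ℝ) / 2 ^ n = 1 / 2 ^ n / 2 := by
    push_cast; rw [pow_succ]; field_simp; ring
  have d2 : ((k : ℝ) + 1) / 2 ^ n - (((2 * k : ℕ) : ℝ) + 1) / 2 ^ (n + 1) = 1 / 2 ^ n / 2 := by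
    push_cast; rw [pow_succ]; field_simp; ring
  rw [d0, d1, d2]
  field_simp

lemma davg_var_nonneg {φ : ℝ → ℝ} (h : IntervalIntegrable φ volume 0 1)
    (h2 : IntervalIntegrable (fun t => (φ t) ^ 2) volume 0 1) {n k : ℕ} (hk : k < 2 ^ n) :
    0 ≤ davg (fun t => (φ t) ^ 2) n k - (davg φ n k) ^ 2 := by
  obtain ⟨b1, b2, b3⟩ := dy_bounds hk
  have i1 := dy_int h b1 b2.le b3
  have i2 := dy_int h2 b1 b2.le b3
  unfold davg avg
  set a := (k : ℝ) / 2 ^ n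
  set b := ((k : ℝ) + 1) / 2 ^ n
  have hl : 0 < b - a := sub_pos.2 b2
  set c := (∫ t in a..b, φ t) / (b - a) with hc
  have hnn : 0 ≤ ∫ t in a..b, (φ t - c) ^ 2 :=
    intervalIntegral.integral_nonneg b2.le (fun t _ => sq_nonneg _)
  have e : ∫ t in a..b, (φ t - c) ^ 2 =
      (∫ t in a..b, (φ t) ^ 2) - 2 * c * (∫ t in a..b, φ t) + (b - a) * c ^ 2 := by
    have : ∀ t, (φ t - c) ^ 2 = ((φ t) ^ 2 - 2 * c * φ t) + c ^ 2 := by intro t; ring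
    simp_rw [this]
    rw [intervalIntegral.integral_add (i2.sub (i1.const_mul _)) (by simp),
      intervalIntegral.integral_sub i2 (i1.const_mul _), intervalIntegral.integral_const_mul]
    simp
  have e2 : ∫ t in a..b, φ t = c * (b - a) := by rw [hc]; field_simp
  rw [e, e2] at hnn
  have : c ^ 2 ≤ (∫ t in a..b, (φ t) ^ 2) / (b - a) := by
    rw [le_div_iff₀ hl]; linarith
  linarith

lemma sum_bound {η α δ ε : ℝ} (hη : 0 ≤ η) (hδ : 0 ≤ δ) (hα : 0 ≤ α)
    (hδα : δ ^ 2 = η ^ 2 + 2 * α ^ 2) (hε : ε ^ 2 = 2 * α ^ 2)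
    (hC : (2 - Real.exp α) * psi η = Real.exp (-α) * psi δ)
    {φ : ℝ → ℝ} (hφ : BMOd ε φ) (n : ℕ) :
    (∑ k ∈ Finset.range (2 ^ n), Real.exp (davg φ n k)) / 2 ^ n * psi δ ≤
      Real.exp (davg φ 0 0) * psi η := by
  obtain ⟨hi, hi2, hv⟩ := hφ
  set V : ℕ → ℕ → ℝ := fun n k => davg (fun t => (φ t) ^ 2) n k - (davg φ n k) ^ 2 with hVdef
  have hV0 : ∀ n k, k < 2 ^ n → 0 ≤ V n k := fun n k hk => davg_var_nonneg hi hi2 hk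
  have hV1 : ∀ n k, k < 2 ^ n → V n k ≤ ε ^ 2 := fun n k hk => hv n k hk
  have hS : ∀ n, (∑ k ∈ Finset.range (2 ^ n),
      Real.exp (davg φ n k) * psi (√(δ ^ 2 - V n k))) / 2 ^ n ≤
      Real.exp (davg φ 0 0) * psi (√(δ ^ 2 - V 0 0)) := by
    intro n
    induction n with
    | zero => simp
    | succ n ih =>
      refine le_trans ?_ ih
      have e2 : (2:ℕ) ^ (n + 1) = 2 * 2 ^ n := by ring
      have e3 : (2:ℝ) ^ (n + 1) = 2 * 2 ^ n := by ring
      rw [e2, sum_range_two_mul', e3, ← div_div]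
      gcongr
      rw [div_le_iff₀ two_pos, Finset.sum_mul]
      apply Finset.sum_le_sum
      intro k hk
      have hk : k < 2 ^ n := Finset.mem_range.1 hk
      have hk1 : 2 * k < 2 ^ (n + 1) := by rw [pow_succ]; omega
      have hk2 : 2 * k + 1 < 2 ^ (n + 1) := by rw [pow_succ]; omega
      rw [mul_comm _ (2:ℝ)]
      have s1 := davg_split hi hk
      have s2 := davg_split hi2 hk
      apply bell_step hη hδ hα hδα hε hC (hV0 _ _ hk1) (hV1 _ _ hk1) (hV0 _ _ hk2) (hV1 _ _ hk2)
        (hV1 _ _ hk) s1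
      simp only [hVdef]
      rw [s1, s2]
      ring
  have hge : ∀ v, 0 ≤ v → psi δ ≤ psi (√(δ ^ 2 - v)) := fun v hv =>
    psi_anti (Real.sqrt_nonneg _) (Real.sqrt_le_iff.2 ⟨hδ, by linarith⟩)
  have hle : psi (√(δ ^ 2 - V 0 0)) ≤ psi η :=
    psi_anti hη (Real.le_sqrt_of_sq_le (by have := hV1 0 0 (by simp); linarith))
  calc _ = (∑ k ∈ Finset.range (2 ^ n), Real.exp (davg φ n k) * psi δ) / 2 ^ n := by
        rw [← Finset.sum_mul]; ring
    _ ≤ (∑ k ∈ Finset.range (2 ^ n),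
          Real.exp (davg φ n k) * psi (√(δ ^ 2 - V n k))) / 2 ^ n := by
        gcongr with k hk
        exact hge _ (hV0 _ _ (Finset.mem_range.1 hk))
    _ ≤ _ := hS n
    _ ≤ _ := by gcongr

/-- Dyadic step approximation. -/
noncomputable def dstep (φ : ℝ → ℝ) (n : ℕ) (x : ℝ) : ℝ := davg φ n ⌊x * 2 ^ n⌋₊

lemma dstep_meas (φ : ℝ → ℝ) (n : ℕ) : Measurable (dstep φ n) := by
  unfold dstep
  have h1 : Measurable (fun x : ℝ => ⌊x * 2 ^ n⌋₊) :=
    Nat.measurable_floor.comp (measurable_id.mul_const _)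
  exact (measurable_from_top (f := davg φ n)).comp h1

lemma lintegral_dstep (φ : ℝ → ℝ) (n N : ℕ) :
    ∫⁻ x in Set.Ico (0:ℝ) ((N : ℝ) / 2 ^ n), ENNReal.ofReal (Real.exp (dstep φ n x)) =
      ENNReal.ofReal ((∑ k ∈ Finset.range N, Real.exp (davg φ n k)) / 2 ^ n) := by
  induction N with
  | zero => simp
  | succ N ih =>
    have hlt : (N : ℝ) / 2 ^ n ≤ ((N + 1 : ℕ) : ℝ) / 2 ^ n := by gcongr; simp
    have hu : Set.Ico (0:ℝ) (((N + 1 : ℕ) : ℝ) / 2 ^ n) =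
        Set.Ico (0:ℝ) ((N : ℝ) / 2 ^ n) ∪ Set.Ico ((N : ℝ) / 2 ^ n) (((N + 1 : ℕ) : ℝ) / 2 ^ n) :=
      (Set.Ico_union_Ico_eq_Ico (by positivity) hlt).symm
    rw [hu, lintegral_union measurableSet_Ico (Set.Ico_disjoint_Ico_same), ih,
      Finset.sum_range_succ, add_div, ENNReal.ofReal_add (by positivity) (by positivity)]
    congr 1
    have hc : ∀ x ∈ Set.Ico ((N : ℝ) / 2 ^ n) (((N + 1 : ℕ) : ℝ) / 2 ^ n),
        ENNReal.ofReal (Real.exp (dstep φ n x)) = ENNReal.ofReal (Real.exp (davg φ n N)) := by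
      intro x hx
      have hp : (0:ℝ) < 2 ^ n := by positivity
      have : ⌊x * 2 ^ n⌋₊ = N := by
        rw [Nat.floor_eq_iff (mul_nonneg (le_trans (by positivity) hx.1) hp.le)]
        refine ⟨(div_le_iff₀ hp).1 hx.1, ?_⟩
        have := (lt_div_iff₀ hp).1 hx.2
        push_cast at this
        exact this
      rw [dstep, this]
    rw [setLIntegral_congr_fun measurableSet_Ico hc, lintegral_const, Measure.restrict_apply_univ,
      Real.volume_Ico, ← ENNReal.ofReal_mul (Real.exp_pos _).le]
    congr 1
    push_cast
    ring

lemma dstep_tendsto {φ : ℝ → ℝ} (h : IntervalIntegrable φ volume 0 1) :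
    ∀ᵐ x, x ∈ Set.Ioo (0:ℝ) 1 →
      Filter.Tendsto (fun n => dstep φ n x) Filter.atTop (nhds (φ x)) := by
  have hI : Integrable ((Set.Ioc (0:ℝ) 1).indicator φ) volume :=
    (integrable_indicator_iff measurableSet_Ioc).2
      ((intervalIntegrable_iff_integrableOn_Ioc_of_le zero_le_one).1 h)
  have hae := IsUnifLocDoublingMeasure.ae_tendsto_average volume hI.locallyIntegrable 1
  filter_upwards [hae] with x hx hx01
  have hr : Filter.Tendsto (fun n : ℕ => ((1:ℝ) / 2) ^ n / 2) Filter.atTop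
      (nhdsWithin 0 (Set.Ioi 0)) := by
    rw [tendsto_nhdsWithin_iff]
    constructor
    · have := (tendsto_pow_atTop_nhds_zero_of_lt_one (r := (1:ℝ) / 2) (by norm_num)
        (by norm_num)).div_const 2
      simpa using this
    · exact Filter.Eventually.of_forall (fun n => by simp only [Set.mem_Ioi]; positivity)
  have ball : ∀ n : ℕ, Metric.closedBall (((⌊x * 2 ^ n⌋₊ : ℝ) + 1 / 2) / 2 ^ n)
      (((1:ℝ) / 2) ^ n / 2) =
      Set.Icc ((⌊x * 2 ^ n⌋₊ : ℝ) / 2 ^ n) (((⌊x * 2 ^ n⌋₊ : ℝ) + 1) / 2 ^ n) := by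
    intro n
    rw [Real.closedBall_eq_Icc]
    congr 1 <;> · rw [one_div_pow]; field_simp; ring
  have hp : ∀ n : ℕ, (0:ℝ) < 2 ^ n := fun n => by positivity
  have := hx (l := Filter.atTop) (fun n : ℕ => ((⌊x * 2 ^ n⌋₊ : ℝ) + 1 / 2) / 2 ^ n)
    (fun n : ℕ => ((1:ℝ) / 2) ^ n / 2) hr (Filter.Eventually.of_forall (fun n => by
      rw [one_mul, ball]
      exact ⟨(div_le_iff₀ (hp n)).2 (Nat.floor_le (mul_nonneg hx01.1.le (hp n).le)),
        (le_div_iff₀ (hp n)).2 (Nat.lt_floor_add_one _).le⟩))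
  rw [Set.indicator_of_mem (Set.Ioo_subset_Ioc_self hx01)] at this
  refine this.congr (fun n => ?_)
  have hk : ⌊x * 2 ^ n⌋₊ < 2 ^ n := by
    rw [Nat.floor_lt (mul_nonneg hx01.1.le (hp n).le)]
    push_cast
    have := mul_lt_mul_of_pos_right hx01.2 (hp n)
    linarith
  obtain ⟨b1, b2, b3⟩ := dy_bounds hk
  rw [ball, dstep, davg, avg]
  set a := (⌊x * 2 ^ n⌋₊ : ℝ) / 2 ^ n
  set b := ((⌊x * 2 ^ n⌋₊ : ℝ) + 1) / 2 ^ n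
  rw [setAverage_eq, integral_Icc_eq_integral_Ioc, intervalIntegral.integral_of_le b2.le,
    setIntegral_congr_fun (g := φ) measurableSet_Ioc (fun y hy =>
      Set.indicator_of_mem (Set.Ioc_subset_Ioc b1 b3 hy) φ)]
  rw [measureReal_def, Real.volume_Icc, ENNReal.toReal_ofReal (by linarith), smul_eq_mul]
  ring

/-- Dyadic integral-form John–Nirenberg inequality with the sharp constant
`e^{−ε/√2}/(2 − e^{ε/√2})` for `0 ≤ ε < √2 log 2`. -/
theorem stmt3 (ε : ℝ) (hε0 : 0 ≤ ε) (hε1 : ε < Real.sqrt 2 * Real.log 2)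
    (φ : ℝ → ℝ) (hφ : BMOd ε φ) :
    IntervalIntegrable (fun t => Real.exp (φ t)) volume 0 1 ∧
    (∫ t in (0:ℝ)..1, Real.exp (φ t)) ≤
      (Real.exp (-ε / Real.sqrt 2) / (2 - Real.exp (ε / Real.sqrt 2))) *
        Real.exp (∫ t in (0:ℝ)..1, φ t) := by
  have hs2 : √2 ^ 2 = 2 := Real.sq_sqrt (by norm_num)
  have hs0 : 0 < √2 := Real.sqrt_pos.2 (by norm_num)
  rw [neg_div]
  have hα0 : 0 ≤ ε / √2 := by positivity
  have hα1 : ε / √2 < Real.log 2 := by rw [div_lt_iff₀ hs0]; linarith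
  have hε : ε ^ 2 = 2 * (ε / √2) ^ 2 := by rw [div_pow, hs2]; ring
  set α := ε / √2
  obtain ⟨η, δ, hη, hδ, hδα, hC, hpos⟩ := exists_delta hα0 hα1
  have hea : 0 < 2 - Real.exp α := by
    have : Real.exp α < 2 := by
      rw [← Real.exp_log (show (0:ℝ) < 2 by norm_num)]
      exact Real.exp_lt_exp.2 hα1
    linarith
  set M := Real.exp (-α) / (2 - Real.exp α) * Real.exp (∫ t in (0:ℝ)..1, φ t) with hM
  have hM0 : 0 ≤ M := by positivity
  have hd0 : davg φ 0 0 = ∫ t in (0:ℝ)..1, φ t := by simp [davg, avg]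
  have hb : ∀ n, (∑ k ∈ Finset.range (2 ^ n), Real.exp (davg φ n k)) / 2 ^ n ≤ M := by
    intro n
    have := sum_bound hη hδ hα0 hδα hε hC hφ n
    rw [hd0] at this
    have hψ : psi η = Real.exp (-α) / (2 - Real.exp α) * psi δ := by
      field_simp
      linarith
    rw [hψ] at this
    refine le_of_mul_le_mul_right (this.trans_eq ?_) hpos
    rw [hM]; ring
  have hl : ∀ n, ∫⁻ x in Set.Ico (0:ℝ) 1, ENNReal.ofReal (Real.exp (dstep φ n x)) ≤
      ENNReal.ofReal M := by
    intro n
    have := lintegral_dstep φ n (2 ^ n)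
    rw [show (((2 ^ n : ℕ) : ℝ)) / 2 ^ n = 1 by push_cast; field_simp] at this
    rw [this]
    exact ENNReal.ofReal_le_ofReal (hb n)
  have hae : ∀ᵐ x ∂(volume.restrict (Set.Ioo (0:ℝ) 1)),
      Filter.Tendsto (fun n => dstep φ n x) Filter.atTop (nhds (φ x)) :=
    (ae_restrict_iff' measurableSet_Ioo).2 (dstep_tendsto hφ.1)
  have hfin : ∫⁻ x in Set.Ioo (0:ℝ) 1, ENNReal.ofReal (Real.exp (φ x)) ≤ ENNReal.ofReal M := by
    calc _ = ∫⁻ x in Set.Ioo (0:ℝ) 1, Filter.liminf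
            (fun n => ENNReal.ofReal (Real.exp (dstep φ n x))) Filter.atTop := by
          apply lintegral_congr_ae
          filter_upwards [hae] with x hx
          exact (ENNReal.tendsto_ofReal
            ((Real.continuous_exp.tendsto _).comp hx)).liminf_eq.symm
      _ ≤ Filter.liminf (fun n => ∫⁻ x in Set.Ioo (0:ℝ) 1,
            ENNReal.ofReal (Real.exp (dstep φ n x))) Filter.atTop :=
          lintegral_liminf_le (fun n => (Real.measurable_exp.comp (dstep_meas φ n)).ennreal_ofReal)
      _ ≤ Filter.liminf (fun _ : ℕ => ENNReal.ofReal M) Filter.atTop := by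
          refine Filter.liminf_le_liminf (Filter.Eventually.of_forall
            (fun n => le_trans ?_ (hl n)))
          exact lintegral_mono_set Set.Ioo_subset_Ico_self
      _ = ENNReal.ofReal M := by simp
  rw [setLIntegral_congr Ioo_ae_eq_Ioc] at hfin
  have hmeas : AEStronglyMeasurable (fun t => Real.exp (φ t)) (volume.restrict (Set.Ioc (0:ℝ) 1)) :=
    Real.continuous_exp.comp_aestronglyMeasurable
      ((intervalIntegrable_iff_integrableOn_Ioc_of_le zero_le_one).1 hφ.1).aestronglyMeasurable
  constructor
  · rw [intervalIntegrable_iff_integrableOn_Ioc_of_le zero_le_one]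
    refine ⟨hmeas, ?_⟩
    rw [hasFiniteIntegral_iff_ofReal (Filter.Eventually.of_forall (fun t => (Real.exp_pos _).le))]
    exact hfin.trans_lt ENNReal.ofReal_lt_top
  · rw [intervalIntegral.integral_of_le zero_le_one, integral_eq_lintegral_of_nonneg_ae
      (Filter.Eventually.of_forall (fun t => (Real.exp_pos _).le)) hmeas]
    exact ENNReal.toReal_le_of_le_ofReal hM0 hfin
end

section
/- Let 0 < ε < 1 and let I be a nondegenerate bounded interval. Then for every φ ∈ BMO_ε(I), the function e^φ is integrable on I and ⟨e^φ⟩_I ≤ B⁺_ε(⟨φ⟩_I, ⟨φ²⟩_I). -/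
open MeasureTheory Real

/-- The parabolic strip `Ω_ε = {x : x₁² ≤ x₂ ≤ x₁² + ε²}`. -/
def Omega (ε : ℝ) : Set (ℝ × ℝ) := {x | x.1 ^ 2 ≤ x.2 ∧ x.2 ≤ x.1 ^ 2 + ε ^ 2}

/-- The upper Bellman function `B⁺_δ`. -/
noncomputable def Bp (δ : ℝ) (x : ℝ × ℝ) : ℝ :=
  (1 - Real.sqrt (δ ^ 2 + x.1 ^ 2 - x.2)) / (1 - δ) *
    Real.exp (x.1 + Real.sqrt (δ ^ 2 + x.1 ^ 2 - x.2) - δ)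

/-- The lower Bellman function `B⁻_δ`. -/
noncomputable def Bm (δ : ℝ) (x : ℝ × ℝ) : ℝ :=
  (1 + Real.sqrt (δ ^ 2 + x.1 ^ 2 - x.2)) / (1 + δ) *
    Real.exp (x.1 - Real.sqrt (δ ^ 2 + x.1 ^ 2 - x.2) + δ)


lemma exp_quad {s y : ℝ} (hs0 : 0 ≤ s) (hs1 : s < 1) (hy : y ≤ s) :
    (1 - s) * Real.exp y ≤ (1 - s) * (1 + y) + y ^ 2 / 2 := by
  rcases le_total y 0 with h | h
  · have hanti : AntitoneOn (fun y : ℝ => 1 + y + y ^ 2 / 2 - Real.exp y) (Set.univ) := by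
      apply antitoneOn_of_deriv_nonpos convex_univ
      · fun_prop
      · fun_prop
      · intro x _
        have hd : HasDerivAt (fun y : ℝ => 1 + y + y ^ 2 / 2 - Real.exp y)
            (1 + (2 * x ^ 1 * 1) / 2 - Real.exp x) x := by
          have := ((((hasDerivAt_id x).const_add 1).add
            (((hasDerivAt_id x).pow 2).div_const 2)).sub (Real.hasDerivAt_exp x))
          exact this.congr_deriv (by simp)
        rw [hd.deriv]
        nlinarith [Real.add_one_le_exp x]
    have := hanti (Set.mem_univ y) (Set.mem_univ 0) h
    simp only [Real.exp_zero] at this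
    have h2 : Real.exp y ≤ 1 + y + y ^ 2 / 2 := by linarith
    nlinarith [sq_nonneg y, mul_le_mul_of_nonneg_left h2 (sub_nonneg.2 hs1.le),
      mul_nonneg hs0 (sq_nonneg y)]
  · have hmono : Monotone (fun y : ℝ => 1 - y ^ 2 / 2 - (1 - y) * Real.exp y) := by
      apply monotone_of_deriv_nonneg
      · fun_prop
      · intro x
        have hd : HasDerivAt (fun y : ℝ => 1 - y ^ 2 / 2 - (1 - y) * Real.exp y)
            (-((2 * x ^ 1 * 1) / 2) - ((-1) * Real.exp x + (1 - x) * Real.exp x)) x := by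
          have := ((((hasDerivAt_id x).pow 2).div_const 2).const_sub 1).sub
            (((hasDerivAt_id x).const_sub 1).mul (Real.hasDerivAt_exp x))
          exact this.congr_deriv (by simp)
        rw [hd.deriv]
        rcases le_total 0 x with hx | hx
        · nlinarith [Real.one_le_exp hx]
        · nlinarith [Real.exp_le_one_iff.2 hx]
    have := hmono h
    simp only [Real.exp_zero] at this
    have h2 : (1 - y) * (Real.exp y - 1 - y) ≤ y ^ 2 / 2 := by nlinarith
    have h3 : 0 ≤ Real.exp y - 1 - y := by linarith [Real.add_one_le_exp y]
    nlinarith [mul_le_mul_of_nonneg_right (sub_le_sub_left hy 1) h3]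

/-- The linear majorant tangent at the lower boundary point `(v, v²)`. -/
noncomputable def Lin (δ v l x : ℝ) : ℝ :=
  Real.exp v * (1 + (l - v) + (x - 2 * v * l + v ^ 2) / (2 * (1 - δ)))

lemma Bp_eq_Lin {δ l x : ℝ} (hδ1 : δ < 1) (hx : x ≤ l ^ 2 + δ ^ 2) :
    Bp δ (l, x) = Lin δ (l + Real.sqrt (δ ^ 2 + l ^ 2 - x) - δ) l x := by
  have hs := Real.sq_sqrt (show 0 ≤ δ ^ 2 + l ^ 2 - x by linarith)
  unfold Bp Lin
  simp only
  set s := Real.sqrt (δ ^ 2 + l ^ 2 - x)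
  have hx : x = δ ^ 2 + l ^ 2 - s ^ 2 := by linarith
  have : (1 - δ) ≠ 0 := by linarith
  rw [mul_comm, hx]
  congr 1
  field_simp
  ring

lemma sqrt_bounds {δ l x : ℝ} (hδ0 : 0 < δ) (hx0 : l ^ 2 ≤ x) :
    Real.sqrt (δ ^ 2 + l ^ 2 - x) ≤ δ := by
  rw [Real.sqrt_le_left hδ0.le]; linarith

lemma Bp_nonneg {δ l x : ℝ} (hδ0 : 0 < δ) (hδ1 : δ < 1) (hx0 : l ^ 2 ≤ x) :
    0 ≤ Bp δ (l, x) := by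
  have := sqrt_bounds hδ0 hx0
  unfold Bp
  simp only
  have h1 : 0 < 1 - δ := by linarith
  have h2 : 0 ≤ 1 - Real.sqrt (δ ^ 2 + l ^ 2 - x) := by linarith
  positivity

lemma Bp_le_Lin {δ l x v : ℝ} (hδ0 : 0 < δ) (hδ1 : δ < 1) (hx0 : l ^ 2 ≤ x)
    (hx : x ≤ l ^ 2 + δ ^ 2) (hv : l - v ≤ δ) :
    Bp δ (l, x) ≤ Lin δ v l x := by
  have hs := Real.sq_sqrt (show 0 ≤ δ ^ 2 + l ^ 2 - x by linarith)
  have hs0 := Real.sqrt_nonneg (δ ^ 2 + l ^ 2 - x)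
  have hsδ := sqrt_bounds hδ0 hx0
  unfold Bp Lin
  simp only
  set s := Real.sqrt (δ ^ 2 + l ^ 2 - x)
  have hx : x = δ ^ 2 + l ^ 2 - s ^ 2 := by linarith
  have h1 : 0 < (1 - δ) := by linarith
  have key := exp_quad (y := l - v - δ + s) hs0 (by linarith) (by linarith)
  have he : Real.exp (l + s - δ) = Real.exp v * Real.exp (l - v - δ + s) := by
    rw [← Real.exp_add]; congr 1; ring
  rw [he, show (1 - s) / (1 - δ) * (Real.exp v * Real.exp (l - v - δ + s)) =
    Real.exp v * (((1 - s) * Real.exp (l - v - δ + s)) / (1 - δ)) by ring]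
  apply mul_le_mul_of_nonneg_left _ (Real.exp_pos v).le
  rw [div_le_iff₀ h1]
  refine key.trans (le_of_eq ?_)
  rw [hx]
  field_simp
  ring

lemma exp_le_Lin {δ v f : ℝ} (hδ0 : 0 < δ) (hδ1 : δ < 1) (hv : f - v ≤ δ) :
    Real.exp f ≤ Lin δ v f (f ^ 2) := by
  have := Bp_le_Lin hδ0 hδ1 (le_refl (f ^ 2)) (by nlinarith) hv
  have h1 : (1 - δ) ≠ 0 := by linarith
  have h2 : Bp δ (f, f ^ 2) = Real.exp f := by
    unfold Bp
    simp only [add_sub_cancel_right]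
    rw [Real.sqrt_sq hδ0.le, div_self h1, one_mul]
    congr 1; ring
  linarith

/-- The modified rising sun set. -/
def RS (F : ℝ → ℝ) (a b : ℝ) : Set ℝ :=
  {t | a < t ∧ t < b ∧ ∃ s, t < s ∧ s ≤ b ∧ min (F t) 0 < F s}

lemma mem_RS {F : ℝ → ℝ} {a b t : ℝ} :
    t ∈ RS F a b ↔ a < t ∧ t < b ∧ ∃ s, t < s ∧ s ≤ b ∧ min (F t) 0 < F s := Iff.rfl

lemma RS_open {F : ℝ → ℝ} (hF : Continuous F) (a b : ℝ) : IsOpen (RS F a b) := by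
  have : RS F a b = Set.Ioo a b ∩ ⋃ s ∈ Set.Iic b, (Set.Iio s ∩ {t | min (F t) 0 < F s}) := by
    ext t
    simp only [RS, Set.mem_ofPred_eq, Set.mem_inter_iff, Set.mem_Ioo, Set.mem_iUnion, Set.mem_Iic,
      Set.mem_Iio, exists_prop]
    constructor
    · rintro ⟨h1, h2, s, h3, h4, h5⟩
      exact ⟨⟨h1, h2⟩, s, h4, h3, h5⟩
    · rintro ⟨⟨h1, h2⟩, s, h4, h3, h5⟩
      exact ⟨h1, h2, s, h3, h4, h5⟩
  rw [this]
  refine isOpen_Ioo.inter (isOpen_biUnion fun s _ => isOpen_Iio.inter ?_)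
  exact isOpen_lt (by fun_prop) continuous_const

lemma RS_right {F : ℝ → ℝ} (hF : Continuous F) {a b α β t : ℝ}
    (haβ : a < β) (hsub : Set.Ioo α β ⊆ RS F a b) (hβ : β ∉ RS F a b)
    (ht : t ∈ Set.Ioo α β) : min (F t) 0 ≤ F β := by
  by_contra hcon
  push Not at hcon
  set S := Set.Icc t β ∩ {s | min (F t) 0 ≤ F s} with hS
  have hSc : IsCompact S :=
    isCompact_Icc.inter_right (isClosed_le continuous_const hF)
  have hSn : S.Nonempty := ⟨t, ⟨le_rfl, ht.2.le⟩, by simp⟩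
  obtain ⟨s0, hs0⟩ := hSc.exists_isGreatest hSn
  have hs0β : s0 < β := by
    rcases lt_or_eq_of_le hs0.1.1.2 with h | h
    · exact h
    · exfalso; have := hs0.1.2; rw [h] at this; simp only [Set.mem_ofPred_eq] at this; linarith
  have hs0U := hsub ⟨lt_of_lt_of_le ht.1 hs0.1.1.1, hs0β⟩
  obtain ⟨_, _, r, hr1, hr2, hr3⟩ := hs0U
  have hg : min (F t) 0 ≤ min (F s0) 0 := le_min hs0.1.2 (min_le_right _ _)
  rcases le_or_gt r β with hrβ | hrβ
  · have : r ∈ S := ⟨⟨hs0.1.1.1.trans hr1.le, hrβ⟩, by simp only [Set.mem_ofPred_eq]; linarith⟩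
    have := hs0.2 this
    linarith
  · apply hβ
    refine ⟨haβ, by linarith, r, hrβ, hr2, ?_⟩
    have := min_le_left (F β) 0
    linarith

lemma RS_notmem {F : ℝ → ℝ} (hF : Continuous F) {a b t : ℝ} (hat : a < t) (htb : t < b)
    (ht : t ∉ RS F a b) : F t ≤ 0 ∧ ∀ s, t < s → s ≤ b → F s ≤ F t := by
  have h1 : ∀ s, t < s → s ≤ b → F s ≤ min (F t) 0 := by
    intro s hs hsb
    by_contra hcon
    push Not at hcon
    exact ht ⟨hat, htb, s, hs, hsb, hcon⟩
  have h2 : F t ≤ min (F t) 0 := by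
    have hc : Filter.Tendsto F (nhdsWithin t (Set.Ioi t)) (nhds (F t)) :=
      (hF.tendsto t).mono_left nhdsWithin_le_nhds
    refine le_of_tendsto hc ?_
    filter_upwards [Ioo_mem_nhdsGT htb] with s hs
    exact h1 s hs.1 hs.2.le
  exact ⟨h2.trans (min_le_right _ _), fun s hs hsb => (h1 s hs hsb).trans (min_le_left _ _)⟩

lemma RS_component {F : ℝ → ℝ} (hF : Continuous F) {a b α β : ℝ} (hFa : F a = 0)
    (hFb : F b ≤ 0) (haα : a ≤ α) (hαβ : α < β) (hβb : β ≤ b)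
    (hsub : Set.Ioo α β ⊆ RS F a b) (hα : α ∉ RS F a b) (hβ : β ∉ RS F a b) :
    F α = F β := by
  have hge : min (F α) 0 ≤ F β := by
    have hc : Filter.Tendsto (fun t => min (F t) 0) (nhdsWithin α (Set.Ioi α))
        (nhds (min (F α) 0)) :=
      ((hF.min continuous_const).tendsto α).mono_left nhdsWithin_le_nhds
    refine le_of_tendsto hc ?_
    filter_upwards [Ioo_mem_nhdsGT hαβ] with s hs
    exact RS_right hF (by linarith) hsub hβ hs
  rcases eq_or_lt_of_le haα with h | h
  · subst h
    rw [hFa] at hge ⊢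
    simp only [min_self] at hge
    refine le_antisymm hge ?_
    rcases eq_or_lt_of_le hβb with h | h
    · rw [h]; exact hFb
    · exact (RS_notmem hF hαβ h hβ).1
  · obtain ⟨h1, h2⟩ := RS_notmem hF h (by linarith) hα
    rw [min_eq_left h1] at hge
    exact le_antisymm hge (h2 β hαβ hβb)

/-- Integral over an open set, component by component. -/
lemma setIntegral_components {U : Set ℝ} {a b : ℝ} (hU : IsOpen U) (hUab : U ⊆ Set.Ioo a b)
    {f : ℝ → ℝ} (hf : IntegrableOn f U)
    (h : ∀ α β, a ≤ α → α < β → β ≤ b → Set.Ioo α β ⊆ U → α ∉ U → β ∉ U →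
      ∫ x in Set.Ioo α β, f x ≤ 0) :
    ∫ x in U, f x ≤ 0 := by
  set 𝒞 : Set (Set ℝ) := (fun x => connectedComponentIn U x) '' U with h𝒞
  have hopen : ∀ C ∈ 𝒞, IsOpen C := by
    rintro _ ⟨x, hx, rfl⟩; exact hU.connectedComponentIn
  have hne : ∀ C ∈ 𝒞, C.Nonempty := by
    rintro _ ⟨x, hx, rfl⟩; exact ⟨x, mem_connectedComponentIn hx⟩
  have hdisj : 𝒞.PairwiseDisjoint id := by
    rintro _ ⟨x, hx, rfl⟩ _ ⟨y, hy, rfl⟩ hxy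
    simp only [Function.onFun, id]
    by_contra hcon
    rw [Set.not_disjoint_iff] at hcon
    obtain ⟨z, hzx, hzy⟩ := hcon
    apply hxy
    show connectedComponentIn U x = connectedComponentIn U y
    rw [connectedComponentIn_eq hzx, connectedComponentIn_eq hzy]
  have hcount : 𝒞.Countable := hdisj.countable_of_isOpen hopen hne
  have hunion : U = ⋃ C : 𝒞, (C : Set ℝ) := by
    ext x
    simp only [Set.mem_iUnion, Subtype.exists, exists_prop]
    constructor
    · intro hx; exact ⟨_, ⟨x, hx, rfl⟩, mem_connectedComponentIn hx⟩
    · rintro ⟨_, ⟨y, hy, rfl⟩, hx⟩; exact connectedComponentIn_subset _ _ hx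
  have : Countable 𝒞 := hcount.to_subtype
  have hsum := hasSum_integral_iUnion (μ := volume) (f := f) (s := fun C : 𝒞 => (C : Set ℝ))
    (fun C => (hopen C C.2).measurableSet)
    (fun C D hCD => hdisj C.2 D.2 (fun h => hCD (Subtype.ext h))) (by rw [← hunion]; exact hf)
  rw [← hunion] at hsum
  refine hasSum_le (g := fun _ => (0:ℝ)) ?_ hsum hasSum_zero
  rintro ⟨_, x, hx, rfl⟩
  set C := connectedComponentIn U x with hC
  show ∫ x in C, f x ≤ 0
  have hCU : C ⊆ U := connectedComponentIn_subset _ _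
  have hxC : x ∈ C := mem_connectedComponentIn hx
  have hCo : IsOpen C := hU.connectedComponentIn
  have hconn : IsConnected C := ⟨⟨x, hxC⟩, isPreconnected_connectedComponentIn⟩
  have hbb : BddBelow C := ⟨a, fun y hy => (hUab (hCU hy)).1.le⟩
  have hba : BddAbove C := ⟨b, fun y hy => (hUab (hCU hy)).2.le⟩
  have hsub := hconn.Ioo_csInf_csSup_subset hbb hba
  set α := sInf C with hαd
  set β := sSup C with hβd
  have hlub : IsLUB C β := isLUB_csSup hconn.nonempty hba
  have hglb : IsGLB C α := isGLB_csInf hconn.nonempty hbb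
  have hβC : β ∉ C := by
    intro hmem
    obtain ⟨c, hc, hcs⟩ := exists_Ico_subset_of_mem_nhds (hCo.mem_nhds hmem) ⟨β + 1, by simp⟩
    have : (β + c) / 2 ∈ C := hcs ⟨by linarith, by linarith⟩
    have := hlub.1 this
    linarith
  have hαC : α ∉ C := by
    intro hmem
    obtain ⟨c, hc, hcs⟩ := exists_Ioc_subset_of_mem_nhds (hCo.mem_nhds hmem) ⟨α - 1, by simp⟩
    have : (α + c) / 2 ∈ C := hcs ⟨by linarith, by linarith⟩
    have := hglb.1 this
    linarith
  have hCeq : C = Set.Ioo α β := by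
    refine Set.Subset.antisymm (fun y hy => ⟨?_, ?_⟩) hsub
    · exact lt_of_le_of_ne (hglb.1 hy) (fun h => hαC (h ▸ hy))
    · exact lt_of_le_of_ne (hlub.1 hy) (fun h => hβC (h ▸ hy))
  have hxI : x ∈ Set.Ioo α β := hCeq ▸ hxC
  have hαβ : α < β := hxI.1.trans hxI.2
  have hβU : β ∉ U := by
    intro hmem
    apply hβC
    have hpre : IsPreconnected (Set.Ioc α β) := isPreconnected_Ioc
    have hs : Set.Ioc α β ⊆ U := by
      intro y hy
      rcases eq_or_lt_of_le hy.2 with h | h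
      · rw [h]; exact hmem
      · exact hCU (hsub ⟨hy.1, h⟩)
    exact hpre.subset_connectedComponentIn ⟨hxI.1, hxI.2.le⟩ hs ⟨hαβ, le_rfl⟩
  have hαU : α ∉ U := by
    intro hmem
    apply hαC
    have hpre : IsPreconnected (Set.Ico α β) := isPreconnected_Ico
    have hs : Set.Ico α β ⊆ U := by
      intro y hy
      rcases eq_or_lt_of_le hy.1 with h | h
      · rw [← h]; exact hmem
      · exact hCU (hsub ⟨h, hy.2⟩)
    exact hpre.subset_connectedComponentIn ⟨hxI.1.le, hxI.2⟩ hs ⟨le_rfl, hαβ⟩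
  rw [hCeq]
  exact h α β (hglb.2 fun y hy => (hUab (hCU hy)).1.le) hαβ
    (hlub.2 fun y hy => (hUab (hCU hy)).2.le) (hCeq ▸ hCU) hαU hβU

/-- The primitive of `φ - l`. -/
noncomputable def Prim (φ : ℝ → ℝ) (a l t : ℝ) : ℝ := (∫ x in a..t, φ x) - l * (t - a)

lemma Prim_cont {φ : ℝ → ℝ} (hφ : Integrable φ) (a l : ℝ) : Continuous (Prim φ a l) := by
  unfold Prim
  have := intervalIntegral.continuous_primitive (f := φ) (μ := volume)
    (fun a b => hφ.intervalIntegrable) a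
  fun_prop

/-- A set on which `φ` has average `l` and variance at most `ε²`. -/
structure GoodSet (φ : ℝ → ℝ) (ε l : ℝ) (P : Set ℝ) : Prop where
  meas : MeasurableSet P
  fin : volume P ≠ ⊤
  mean : ∫ x in P, φ x = l * volume.real P
  sq : ∫ x in P, (φ x) ^ 2 ≤ (l ^ 2 + ε ^ 2) * volume.real P

lemma RS_subset (F : ℝ → ℝ) (a b : ℝ) : RS F a b ⊆ Set.Ioo a b := by
  intro t ht
  exact ⟨(mem_RS.1 ht).1, (mem_RS.1 ht).2.1⟩

lemma interval_sq {φ : ℝ → ℝ} {ε l α β : ℝ} (hαβ : α < β)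
    (hm : ∫ x in α..β, φ x = l * (β - α))
    (hb : avg (fun t => (φ t) ^ 2) α β - (avg φ α β) ^ 2 ≤ ε ^ 2) :
    ∫ x in α..β, (φ x) ^ 2 ≤ (l ^ 2 + ε ^ 2) * (β - α) := by
  have h : 0 < β - α := by linarith
  unfold avg at hb
  rw [hm, mul_div_cancel_right₀ _ h.ne'] at hb
  rw [← div_le_iff₀ h]
  linarith

lemma RS_good {φ : ℝ → ℝ} {ε a b l : ℝ} (hφ : Integrable φ)
    (hφ2 : Integrable (fun t => (φ t) ^ 2)) (hab : a < b)
    (hb : ∀ c d : ℝ, a ≤ c → c < d → d ≤ b →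
      avg (fun t => (φ t) ^ 2) c d - (avg φ c d) ^ 2 ≤ ε ^ 2)
    (hl : avg φ a b ≤ l) : GoodSet φ ε l (RS (Prim φ a l) a b) := by
  have hF := Prim_cont hφ a l
  set U := RS (Prim φ a l) a b with hU
  have hUo : IsOpen U := RS_open hF a b
  have hUs : U ⊆ Set.Ioo a b := RS_subset _ a b
  have hfin : volume U ≠ ⊤ := ((measure_mono hUs).trans_lt (by simp)).ne
  have hFa : Prim φ a l a = 0 := by simp [Prim]
  have hFb : Prim φ a l b ≤ 0 := by
    unfold avg at hl
    rw [div_le_iff₀ (by linarith)] at hl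
    unfold Prim; linarith
  have hcomp : ∀ α β, a ≤ α → α < β → β ≤ b → Set.Ioo α β ⊆ U → α ∉ U → β ∉ U →
      ∫ x in α..β, φ x = l * (β - α) := by
    intro α β h1 h2 h3 h4 h5 h6
    have h := RS_component hF hFa hFb h1 h2 h3 h4 h5 h6
    unfold Prim at h
    have h7 := intervalIntegral.integral_add_adjacent_intervals
      (hφ.intervalIntegrable (a := a) (b := α)) (hφ.intervalIntegrable (a := α) (b := β))
    linarith
  have hc : ∀ c : ℝ, IntegrableOn (fun _ => c) U := fun c => integrableOn_const hfin
  have hIoo : ∀ (f : ℝ → ℝ) {α β : ℝ}, α < β →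
      ∫ x in Set.Ioo α β, f x = ∫ x in α..β, f x := by
    intro f α β h
    rw [intervalIntegral.integral_of_le h.le, integral_Ioc_eq_integral_Ioo]
  have hii : ∀ {α β : ℝ}, IntervalIntegrable φ volume α β := hφ.intervalIntegrable
  have hii2 : ∀ {α β : ℝ}, IntervalIntegrable (fun t => (φ t) ^ 2) volume α β :=
    hφ2.intervalIntegrable
  refine ⟨hUo.measurableSet, hfin, ?_, ?_⟩
  · apply le_antisymm
    · have := setIntegral_components hUo hUs (f := fun x => φ x - l)
        (hφ.integrableOn.sub (hc l)) (by
          intro α β h1 h2 h3 h4 h5 h6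
          rw [hIoo _ h2, intervalIntegral.integral_sub hii (by simp),
            hcomp α β h1 h2 h3 h4 h5 h6]
          simp [mul_comm])
      rw [integral_sub hφ.integrableOn (hc l)] at this
      simp [mul_comm] at this ⊢
      linarith
    · have := setIntegral_components hUo hUs (f := fun x => l - φ x)
        ((hc l).sub hφ.integrableOn) (by
          intro α β h1 h2 h3 h4 h5 h6
          rw [hIoo _ h2, intervalIntegral.integral_sub (by simp) hii,
            hcomp α β h1 h2 h3 h4 h5 h6]
          simp [mul_comm])
      rw [integral_sub (hc l) hφ.integrableOn] at this
      simp [mul_comm] at this ⊢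
      linarith
  · have := setIntegral_components hUo hUs (f := fun x => (φ x) ^ 2 - (l ^ 2 + ε ^ 2))
        (hφ2.integrableOn.sub (hc _)) (by
          intro α β h1 h2 h3 h4 h5 h6
          rw [hIoo _ h2, intervalIntegral.integral_sub hii2 (by simp)]
          have := interval_sq h2 (hcomp α β h1 h2 h3 h4 h5 h6) (hb α β h1 h2 h3)
          rw [intervalIntegral.integral_const, smul_eq_mul]
          linarith)
    rw [integral_sub hφ2.integrableOn (hc _), setIntegral_const, smul_eq_mul] at this
    linarith

lemma Ioo_good {φ : ℝ → ℝ} {ε a b : ℝ} (hab : a < b)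
    (hb : avg (fun t => (φ t) ^ 2) a b - (avg φ a b) ^ 2 ≤ ε ^ 2) :
    GoodSet φ ε (avg φ a b) (Set.Ioo a b) := by
  have hIoo : ∀ (f : ℝ → ℝ), ∫ x in Set.Ioo a b, f x = ∫ x in a..b, f x := by
    intro f
    rw [intervalIntegral.integral_of_le hab.le, integral_Ioc_eq_integral_Ioo]
  have hv : volume.real (Set.Ioo a b) = b - a := by
    simp [hab.le]
  have hm : ∫ x in a..b, φ x = avg φ a b * (b - a) := by
    unfold avg; rw [div_mul_cancel₀]; linarith
  refine ⟨measurableSet_Ioo, by simp, ?_, ?_⟩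
  · rw [hIoo, hv, hm]
  · rw [hIoo, hv]; exact interval_sq hab hm hb

lemma RS_mono {φ : ℝ → ℝ} {a b l l' : ℝ} (hll : l ≤ l') :
    RS (Prim φ a l') a b ⊆ RS (Prim φ a l) a b := by
  intro t ht
  obtain ⟨h1, h2, s, h3, h4, h5⟩ := mem_RS.1 ht
  refine mem_RS.2 ⟨h1, h2, s, h3, h4, ?_⟩
  unfold Prim at *
  rw [min_lt_iff] at h5 ⊢
  rcases h5 with h5 | h5
  · left; nlinarith
  · right; nlinarith

lemma RS_ae {φ : ℝ → ℝ} {a b l : ℝ} (hφ : Integrable φ) :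
    ∀ᵐ x, x ∈ Set.Ioo a b → x ∉ RS (Prim φ a l) a b → φ x ≤ l := by
  filter_upwards [LocallyIntegrable.ae_hasDerivAt_integral hφ.locallyIntegrable] with x hx hxI hxU
  have hd : HasDerivAt (Prim φ a l) (φ x - l) x := by
    have := (hx a).sub (((hasDerivAt_id x).sub_const a).const_mul l)
    exact this.congr_deriv (by simp)
  have h2 := (RS_notmem (Prim_cont hφ a l) hxI.1 hxI.2 hxU).2
  have ht := hd.tendsto_slope.mono_left (nhdsWithin_mono x (show Set.Ioi x ⊆ {x}ᶜ by
    intro y hy; simp only [Set.mem_compl_iff, Set.mem_singleton_iff]; exact (ne_of_gt hy)))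
  have : φ x - l ≤ 0 := by
    refine le_of_tendsto ht ?_
    filter_upwards [Ioo_mem_nhdsGT hxI.2] with y hy
    rw [slope_def_field]
    exact div_nonpos_of_nonpos_of_nonneg (by linarith [h2 y hy.1 hy.2.le]) (by linarith [hy.1])
  linarith

/-- The Bellman functional of a set. -/
noncomputable def BF (φ : ℝ → ℝ) (δ l : ℝ) (P : Set ℝ) : ℝ :=
  volume.real P * Bp δ (l, (∫ x in P, (φ x) ^ 2) / volume.real P)

lemma quad_integral {φ : ℝ → ℝ} {P : Set ℝ} (hfin : volume P ≠ ⊤)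
    (hφ : Integrable φ) (hφ2 : Integrable (fun t => (φ t) ^ 2)) (A B C : ℝ) :
    ∫ x in P, (A * (φ x) ^ 2 + B * φ x + C) =
      A * (∫ x in P, (φ x) ^ 2) + B * (∫ x in P, φ x) + C * volume.real P := by
  have hc : IntegrableOn (fun _ => C) P := integrableOn_const hfin
  have h2 : IntegrableOn (fun x => A * (φ x) ^ 2) P := hφ2.integrableOn.const_mul _
  have h1 : IntegrableOn (fun x => B * φ x) P := hφ.integrableOn.const_mul _
  have h3 : IntegrableOn (fun x => A * (φ x) ^ 2 + B * φ x) P := h2.add h1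
  rw [integral_add h3 hc, integral_add h2 h1, integral_const_mul, integral_const_mul,
    setIntegral_const, smul_eq_mul, mul_comm C]

lemma GoodSet.lower {φ : ℝ → ℝ} {ε l : ℝ} {P : Set ℝ} (hP : GoodSet φ ε l P) (hφ : Integrable φ)
    (hφ2 : Integrable (fun t => (φ t) ^ 2)) (hpos : 0 < volume.real P) :
    l ^ 2 ≤ (∫ x in P, (φ x) ^ 2) / volume.real P := by
  have h0 : 0 ≤ ∫ x in P, (φ x - l) ^ 2 := integral_nonneg fun x => sq_nonneg _
  have h1 : ∫ x in P, (φ x - l) ^ 2 = ∫ x in P, (1 * (φ x) ^ 2 + (-2 * l) * φ x + l ^ 2) := by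
    congr 1; ext x; ring
  rw [h1, quad_integral hP.fin hφ hφ2, hP.mean] at h0
  rw [le_div_iff₀ hpos]
  nlinarith

lemma GoodSet.upper {φ : ℝ → ℝ} {ε l : ℝ} {P : Set ℝ} (hP : GoodSet φ ε l P)
    (hpos : 0 < volume.real P) :
    (∫ x in P, (φ x) ^ 2) / volume.real P ≤ l ^ 2 + ε ^ 2 := by
  rw [div_le_iff₀ hpos]; exact hP.sq

lemma GoodSet.BF_nonneg {φ : ℝ → ℝ} {ε δ l : ℝ} {P : Set ℝ} (hP : GoodSet φ ε l P)
    (hφ : Integrable φ) (hφ2 : Integrable (fun t => (φ t) ^ 2)) (hδ0 : 0 < δ) (hδ1 : δ < 1) :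
    0 ≤ BF φ δ l P := by
  unfold BF
  rcases (measureReal_nonneg (μ := volume) (s := P)).eq_or_lt with h | h
  · rw [← h]; simp
  · exact mul_nonneg h.le (Bp_nonneg hδ0 hδ1 (hP.lower hφ hφ2 h))

lemma GoodSet.integral_Lin {φ : ℝ → ℝ} {ε l : ℝ} {P : Set ℝ} (hP : GoodSet φ ε l P)
    (hφ : Integrable φ) (hφ2 : Integrable (fun t => (φ t) ^ 2)) (hpos : 0 < volume.real P)
    (δ v : ℝ) :
    ∫ x in P, Lin δ v (φ x) ((φ x) ^ 2) =
      volume.real P * Lin δ v l ((∫ x in P, (φ x) ^ 2) / volume.real P) := by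
  set k := 1 / (2 * (1 - δ)) with hk
  have h1 : ∫ x in P, Lin δ v (φ x) ((φ x) ^ 2) =
      ∫ x in P, ((Real.exp v * k) * (φ x) ^ 2 + (Real.exp v * (1 - 2 * v * k)) * φ x +
        Real.exp v * (1 - v + v ^ 2 * k)) := by
    congr 1; ext x; unfold Lin; rw [div_eq_mul_one_div, ← hk]; ring
  rw [h1, quad_integral hP.fin hφ hφ2, hP.mean]
  unfold Lin
  rw [div_eq_mul_one_div (_ - _ + _) (2 * (1 - δ)), ← hk]
  field_simp
  ring

lemma Lin_integrable {φ : ℝ → ℝ} {P : Set ℝ} (hfin : volume P ≠ ⊤)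
    (hφ : Integrable φ) (hφ2 : Integrable (fun t => (φ t) ^ 2)) (δ v : ℝ) :
    IntegrableOn (fun x => Lin δ v (φ x) ((φ x) ^ 2)) P := by
  have hc : ∀ c : ℝ, IntegrableOn (fun _ => c) P := fun c => integrableOn_const hfin
  set k := 1 / (2 * (1 - δ)) with hk
  have h1 : (fun x => Lin δ v (φ x) ((φ x) ^ 2)) =
      fun x => ((Real.exp v * k) * (φ x) ^ 2 + (Real.exp v * (1 - 2 * v * k)) * φ x +
        Real.exp v * (1 - v + v ^ 2 * k)) := by
    ext x; unfold Lin; rw [div_eq_mul_one_div, ← hk]; ring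
  rw [h1]
  exact ((hφ2.integrableOn.const_mul _).add (hφ.integrableOn.const_mul _)).add (hc _)

lemma BF_step {φ : ℝ → ℝ} {ε δ l l' : ℝ} {P Q : Set ℝ} (hφ : Integrable φ)
    (hφ2 : Integrable (fun t => (φ t) ^ 2)) (hε0 : 0 < ε) (hεδ : ε < δ) (hδ1 : δ < 1)
    (hP : GoodSet φ ε l P) (hQ : GoodSet φ ε l' Q) (hQP : Q ⊆ P)
    (hη : l' - l ≤ Real.sqrt (δ ^ 2 - ε ^ 2))
    (hae : ∀ᵐ x, x ∈ P → x ∉ Q → φ x ≤ l') :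
    IntegrableOn (fun x => Real.exp (φ x)) (P \ Q) ∧
    (∫ x in P \ Q, Real.exp (φ x)) + BF φ δ l' Q ≤ BF φ δ l P := by
  have hδ0 : 0 < δ := by linarith
  have hPQm : MeasurableSet (P \ Q) := hP.meas.diff hQ.meas
  have hPQfin : volume (P \ Q) ≠ ⊤ :=
    ((measure_mono Set.sdiff_subset).trans_lt hP.fin.lt_top).ne
  have hae' : ∀ᵐ x ∂(volume.restrict (P \ Q)), φ x ≤ l' := by
    rw [ae_restrict_iff' hPQm]
    filter_upwards [hae] with x hx hxm using hx hxm.1 hxm.2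
  have hint : IntegrableOn (fun x => Real.exp (φ x)) (P \ Q) := by
    refine Integrable.mono' (g := fun _ => Real.exp l') (integrableOn_const hPQfin)
      (Real.continuous_exp.comp_aestronglyMeasurable hφ.aestronglyMeasurable.restrict) ?_
    filter_upwards [hae'] with x hx
    rw [Real.norm_eq_abs, abs_of_pos (Real.exp_pos _)]
    exact Real.exp_le_exp.2 hx
  refine ⟨hint, ?_⟩
  rcases (measureReal_nonneg (μ := volume) (s := P)).eq_or_lt with h | h
  · have hP0 : volume P = 0 := by
      rw [eq_comm, measureReal_eq_zero_iff hP.fin] at h; exact h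
    have hQ0 : volume Q = 0 := measure_mono_null hQP hP0
    have hPQ0 : volume (P \ Q) = 0 := measure_mono_null Set.sdiff_subset hP0
    rw [setIntegral_measure_zero _ hPQ0]
    simp [BF, measureReal_def, hP0, hQ0]
  have hx0 := hP.lower hφ hφ2 h
  have hx1 := hP.upper h
  set x2 := (∫ x in P, (φ x) ^ 2) / volume.real P with hx2
  have hsq : ε ^ 2 < δ ^ 2 := by nlinarith
  have hsl : l' - l ≤ Real.sqrt (δ ^ 2 + l ^ 2 - x2) :=
    hη.trans (Real.sqrt_le_sqrt (by linarith))
  set v := l + Real.sqrt (δ ^ 2 + l ^ 2 - x2) - δ with hv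
  have hvl : l' - v ≤ δ := by linarith
  have hBP : BF φ δ l P = ∫ x in P, Lin δ v (φ x) ((φ x) ^ 2) := by
    rw [hP.integral_Lin hφ hφ2 h, BF, ← hx2, Bp_eq_Lin hδ1 (by linarith)]
  have hBQ : BF φ δ l' Q ≤ ∫ x in Q, Lin δ v (φ x) ((φ x) ^ 2) := by
    rcases (measureReal_nonneg (μ := volume) (s := Q)).eq_or_lt with h | h
    · have hQ0 : volume Q = 0 := by
        rw [eq_comm, measureReal_eq_zero_iff hQ.fin] at h; exact h
      rw [setIntegral_measure_zero _ hQ0, BF, ← h]; simp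
    · rw [hQ.integral_Lin hφ hφ2 h, BF]
      exact mul_le_mul_of_nonneg_left (Bp_le_Lin hδ0 hδ1 (hQ.lower hφ hφ2 h)
        (by linarith [hQ.upper h]) hvl) h.le
  have hsplit : ∫ x in P, Lin δ v (φ x) ((φ x) ^ 2) =
      (∫ x in P \ Q, Lin δ v (φ x) ((φ x) ^ 2)) + ∫ x in Q, Lin δ v (φ x) ((φ x) ^ 2) := by
    rw [← setIntegral_union Set.disjoint_sdiff_left hQ.meas
      (Lin_integrable hPQfin hφ hφ2 δ v) (Lin_integrable hQ.fin hφ hφ2 δ v),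
      Set.sdiff_union_of_subset hQP]
  have hexp : ∫ x in P \ Q, Real.exp (φ x) ≤ ∫ x in P \ Q, Lin δ v (φ x) ((φ x) ^ 2) := by
    refine integral_mono_ae hint (Lin_integrable hPQfin hφ hφ2 δ v) ?_
    filter_upwards [hae'] with x hx
    exact exp_le_Lin hδ0 hδ1 (by linarith)
  linarith

lemma core_delta {φ : ℝ → ℝ} {ε δ a b : ℝ} (hφ : Integrable φ)
    (hφ2 : Integrable (fun t => (φ t) ^ 2)) (hab : a < b)
    (hε0 : 0 < ε) (hεδ : ε < δ) (hδ1 : δ < 1)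
    (hb : ∀ c d : ℝ, a ≤ c → c < d → d ≤ b →
      avg (fun t => (φ t) ^ 2) c d - (avg φ c d) ^ 2 ≤ ε ^ 2) :
    IntegrableOn (fun x => Real.exp (φ x)) (Set.Ioo a b) ∧
    ∫ x in Set.Ioo a b, Real.exp (φ x) ≤ BF φ δ (avg φ a b) (Set.Ioo a b) := by
  have hδ0 : 0 < δ := by linarith
  set η := Real.sqrt (δ ^ 2 - ε ^ 2) with hη
  have hη0 : 0 < η := Real.sqrt_pos.2 (by nlinarith)
  set l : ℕ → ℝ := fun n => avg φ a b + n * η with hl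
  have hl0 : l 0 = avg φ a b := by simp [hl]
  have hlmono : ∀ n, l (n + 1) = l n + η := by intro n; simp only [hl]; push_cast; ring
  have hlge : ∀ n, avg φ a b ≤ l n := by
    intro n; simp only [hl]; have : 0 ≤ (n : ℝ) * η := by positivity
    linarith
  set V : ℕ → Set ℝ := fun n => if n = 0 then Set.Ioo a b else RS (Prim φ a (l n)) a b with hV
  have hV0 : V 0 = Set.Ioo a b := by simp [hV]
  have hVs : ∀ n, V (n + 1) = RS (Prim φ a (l (n + 1))) a b := by intro n; simp [hV]
  have hgood : ∀ n, GoodSet φ ε (l n) (V n) := by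
    intro n
    cases n with
    | zero => rw [hV0, hl0]; exact Ioo_good hab (hb a b le_rfl hab le_rfl)
    | succ n => rw [hVs]; exact RS_good hφ hφ2 hab hb (hlge _)
  have hVsub : ∀ n, V n ⊆ Set.Ioo a b := by
    intro n
    cases n with
    | zero => rw [hV0]
    | succ n => rw [hVs]; exact RS_subset _ _ _
  have hVanti1 : ∀ n, V (n + 1) ⊆ V n := by
    intro n
    cases n with
    | zero => rw [hV0]; exact hVsub _
    | succ n => rw [hVs, hVs]; exact RS_mono (by rw [hlmono (n + 1)]; linarith)
  have hVanti : Antitone V := antitone_nat_of_succ_le hVanti1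
  have hstep : ∀ n, IntegrableOn (fun x => Real.exp (φ x)) (V n \ V (n + 1)) ∧
      (∫ x in V n \ V (n + 1), Real.exp (φ x)) + BF φ δ (l (n + 1)) (V (n + 1))
        ≤ BF φ δ (l n) (V n) := by
    intro n
    refine BF_step hφ hφ2 hε0 hεδ hδ1 (hgood n) (hgood (n + 1)) (hVanti1 n)
      (by rw [hlmono]; linarith) ?_
    filter_upwards [RS_ae (a := a) (b := b) (l := l (n + 1)) hφ] with x hx h1 h2
    exact hx (hVsub n h1) (by rw [← hVs]; exact h2)
  have hchain : ∀ n, IntegrableOn (fun x => Real.exp (φ x)) (Set.Ioo a b \ V n) ∧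
      (∫ x in Set.Ioo a b \ V n, Real.exp (φ x)) + BF φ δ (l n) (V n)
        ≤ BF φ δ (l 0) (V 0) := by
    intro n
    induction n with
    | zero => rw [hV0]; simp
    | succ n ih =>
      have hu : Set.Ioo a b \ V (n + 1) = (Set.Ioo a b \ V n) ∪ (V n \ V (n + 1)) := by
        ext x
        have h1 := @hVanti1 n x
        have h2 := @hVsub n x
        simp only [Set.mem_sdiff, Set.mem_union]
        tauto
      have hd : Disjoint (Set.Ioo a b \ V n) (V n \ V (n + 1)) := by
        rw [Set.disjoint_left]; intro x h1 h2; exact h1.2 h2.1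
      rw [hu]
      refine ⟨ih.1.union (hstep n).1, ?_⟩
      rw [setIntegral_union hd ((hgood n).meas.diff (hgood (n + 1)).meas) ih.1 (hstep n).1]
      linarith [ih.2, (hstep n).2]
  have hbound : ∀ n, ∫ x in Set.Ioo a b \ V n, Real.exp (φ x) ≤
      BF φ δ (avg φ a b) (Set.Ioo a b) := by
    intro n
    have h1 := (hchain n).2
    have h2 := (hgood n).BF_nonneg hφ hφ2 hδ0 hδ1
    rw [hl0, hV0] at h1
    linarith
  have hltop : Filter.Tendsto l Filter.atTop Filter.atTop := by
    apply Filter.tendsto_atTop_add_const_left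
    exact tendsto_natCast_atTop_atTop.atTop_mul_const hη0
  have hmeas : Filter.Tendsto (fun n => volume.real (V n)) Filter.atTop (nhds 0) := by
    have hM : Filter.Tendsto (fun n => (∫ x, |φ x|) / l n) Filter.atTop (nhds 0) :=
      Filter.Tendsto.const_div_atTop hltop _
    refine tendsto_of_tendsto_of_tendsto_of_le_of_le' tendsto_const_nhds hM
      (Filter.Eventually.of_forall fun n => measureReal_nonneg) ?_
    filter_upwards [hltop.eventually_gt_atTop 0] with n hn
    rw [le_div_iff₀ hn, mul_comm, ← (hgood n).mean]
    calc ∫ x in V n, φ x ≤ ∫ x in V n, |φ x| :=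
          integral_mono hφ.integrableOn hφ.abs.integrableOn (fun x => le_abs_self _)
      _ ≤ ∫ x, |φ x| := setIntegral_le_integral hφ.abs
          (Filter.Eventually.of_forall fun x => abs_nonneg _)
  have hnull : volume (⋂ n, V n) = 0 := by
    have hfin : volume (⋂ n, V n) ≠ ⊤ :=
      ((measure_mono (Set.iInter_subset V 0)).trans_lt (hgood 0).fin.lt_top).ne
    rw [← measureReal_eq_zero_iff hfin]
    refine le_antisymm (ge_of_tendsto' hmeas fun n => ?_) measureReal_nonneg
    exact measureReal_mono (Set.iInter_subset V n) (hgood n).fin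
  have hcover : AECover (volume.restrict (Set.Ioo a b)) Filter.atTop
      (fun n => Set.Ioo a b \ V n) := by
    refine ⟨?_, fun n => measurableSet_Ioo.diff (hgood n).meas⟩
    rw [ae_restrict_iff' measurableSet_Ioo]
    have : ∀ᵐ x, x ∉ ⋂ n, V n := measure_eq_zero_iff_ae_notMem.1 hnull
    filter_upwards [this] with x hx hxI
    simp only [Set.mem_iInter, not_forall] at hx
    obtain ⟨N, hN⟩ := hx
    filter_upwards [Filter.eventually_ge_atTop N] with n hn
    exact ⟨hxI, fun h => hN (hVanti hn h)⟩
  have hrr : ∀ n, (volume.restrict (Set.Ioo a b)).restrict (Set.Ioo a b \ V n) =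
      volume.restrict (Set.Ioo a b \ V n) := by
    intro n
    rw [Measure.restrict_restrict (measurableSet_Ioo.diff (hgood n).meas),
      Set.inter_eq_left.2 Set.sdiff_subset]
  have hint : Integrable (fun x => Real.exp (φ x)) (volume.restrict (Set.Ioo a b)) := by
    refine hcover.integrable_of_integral_bounded_of_nonneg_ae
      (BF φ δ (avg φ a b) (Set.Ioo a b)) ?_ ?_ ?_
    · intro n
      rw [IntegrableOn, hrr]; exact (hchain n).1
    · exact Filter.Eventually.of_forall fun x => (Real.exp_pos _).le
    · exact Filter.Eventually.of_forall fun n => by rw [hrr]; exact hbound n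
  refine ⟨hint, ?_⟩
  refine le_of_tendsto' (hcover.integral_tendsto_of_countably_generated hint) fun n => ?_
  rw [hrr]; exact hbound n

lemma Bp_continuousAt {ε : ℝ} (hε1 : ε < 1) (x : ℝ × ℝ) :
    ContinuousAt (fun δ => Bp δ x) ε := by
  unfold Bp
  have : (1 - ε) ≠ 0 := by linarith
  fun_prop (disch := assumption)

/-- Upper Bellman estimate in the continuous case: for `φ ∈ BMO_ε(I)` with
`0 < ε < 1`, the average of `e^φ` is at most `B⁺_ε(⟨φ⟩_I, ⟨φ²⟩_I)`. -/
theorem stmt8 (ε : ℝ) (hε0 : 0 < ε) (hε1 : ε < 1) (a b : ℝ) (hab : a < b)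
    (φ : ℝ → ℝ) (hφ : BMOe ε a b φ) :
    IntervalIntegrable (fun t => Real.exp (φ t)) volume a b ∧
    avg (fun t => Real.exp (φ t)) a b ≤
      Bp ε (avg φ a b, avg (fun t => (φ t) ^ 2) a b) := by
  obtain ⟨h1, h2, h3⟩ := hφ
  set ψ : ℝ → ℝ := (Set.Ioc a b).indicator φ with hψ
  have hψeq : ∀ x ∈ Set.Ioc a b, ψ x = φ x := fun x hx => Set.indicator_of_mem hx φ
  have hψ2 : (fun t => (ψ t) ^ 2) = (Set.Ioc a b).indicator (fun t => (φ t) ^ 2) := by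
    ext t
    by_cases ht : t ∈ Set.Ioc a b
    · rw [Set.indicator_of_mem ht, hψeq t ht]
    · rw [Set.indicator_of_notMem ht, hψ, Set.indicator_of_notMem ht]; simp
  have hi1 : Integrable ψ := by
    rw [hψ, integrable_indicator_iff measurableSet_Ioc]
    exact (intervalIntegrable_iff_integrableOn_Ioc_of_le hab.le).1 h1
  have hi2 : Integrable (fun t => (ψ t) ^ 2) := by
    rw [hψ2, integrable_indicator_iff measurableSet_Ioc]
    exact (intervalIntegrable_iff_integrableOn_Ioc_of_le hab.le).1 h2
  have havg : ∀ (g : ℝ → ℝ) (c d : ℝ), a ≤ c → c < d → d ≤ b →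
      avg (fun t => g (ψ t)) c d = avg (fun t => g (φ t)) c d := by
    intro g c d hc hcd hd
    unfold avg
    congr 1
    rw [intervalIntegral.integral_of_le hcd.le, intervalIntegral.integral_of_le hcd.le]
    refine setIntegral_congr_fun measurableSet_Ioc fun x hx => ?_
    rw [hψeq x ⟨lt_of_le_of_lt hc hx.1, hx.2.trans hd⟩]
  have hb : ∀ c d : ℝ, a ≤ c → c < d → d ≤ b →
      avg (fun t => (ψ t) ^ 2) c d - (avg ψ c d) ^ 2 ≤ ε ^ 2 := by
    intro c d hc hcd hd
    have e1 := havg (fun x => x ^ 2) c d hc hcd hd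
    have e2 := havg (fun x => x) c d hc hcd hd
    rw [e1, e2]
    exact h3 c d hc hcd hd
  rw [← havg Real.exp a b le_rfl hab le_rfl, ← havg (fun x => x ^ 2) a b le_rfl hab le_rfl,
    ← havg (fun x => x) a b le_rfl hab le_rfl]
  have hba : 0 < b - a := by linarith
  have hIoo : ∀ (f : ℝ → ℝ), ∫ x in Set.Ioo a b, f x = ∫ x in a..b, f x := by
    intro f
    rw [intervalIntegral.integral_of_le hab.le, integral_Ioc_eq_integral_Ioo]
  have hv : volume.real (Set.Ioo a b) = b - a := by
    simp [hab.le]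
  constructor
  · obtain ⟨δ, hδ, hδ1⟩ := exists_between hε1
    have := (core_delta hi1 hi2 hab hε0 hδ hδ1 hb).1
    rw [intervalIntegrable_iff_integrableOn_Ioc_of_le hab.le, integrableOn_Ioc_iff_integrableOn_Ioo]
    refine this.congr_fun (fun x hx => ?_) measurableSet_Ioo
    simp only
    rw [hψeq x ⟨hx.1, hx.2.le⟩]
  · have ht : Filter.Tendsto (fun δ => Bp δ (avg ψ a b, avg (fun t => (ψ t) ^ 2) a b))
        (nhdsWithin ε (Set.Ioi ε)) (nhds (Bp ε (avg ψ a b, avg (fun t => (ψ t) ^ 2) a b))) :=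
      (Bp_continuousAt hε1 _).tendsto.mono_left nhdsWithin_le_nhds
    refine ge_of_tendsto ht ?_
    filter_upwards [Ioo_mem_nhdsGT hε1] with δ hδ
    have := (core_delta hi1 hi2 hab hε0 hδ.1 hδ.2 hb).2
    rw [BF, hv, hIoo, hIoo] at this
    unfold avg at this ⊢
    rw [div_le_iff₀ hba]
    linarith
end

section
/- Let 0 < ε < √2·log 2 and ε < δ < 1. Then min(0, g(δ,ε)) is the least value of f_δ on S_{δ,ε}: for every (a, a₋, a₊, θ) ∈ S_{δ,ε} one has f_δ(a, a₋, a₊, θ) ≥ min(0, g(δ,ε)), and this value is attained (indeed f_δ(a, a, a, 0) = 0 for any a ∈ [√(δ²−ε²), δ], and f_δ(√(δ²−ε²), δ, √(δ²−ε²), ε/√2) = g(δ,ε)). -/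
open MeasureTheory Real
/-- The function `g(δ,ε)` whose root determines the sharp dyadic parameter `δ⁺(ε)`. -/
noncomputable def g (δ ε : ℝ) : ℝ :=
  (1 - Real.sqrt (δ ^ 2 - ε ^ 2)) * Real.exp (Real.sqrt (δ ^ 2 - ε ^ 2)) *
      (2 - Real.exp (ε / Real.sqrt 2)) -
    (1 - δ) * Real.exp (δ - ε / Real.sqrt 2)

/-- The function `f_δ` of the four-variable extremal problem (its formula does
not depend on `δ`). -/
noncomputable def fδ (a am ap θ : ℝ) : ℝ :=
  2 * (1 - a) * Real.exp a - (1 - am) * Real.exp (am - θ) -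
    (1 - ap) * Real.exp (ap + θ)

/-- The constraint set `S_{δ,ε}`. -/
def Sset (δ ε : ℝ) : Set (ℝ × ℝ × ℝ × ℝ) :=
  {p | p.1 ∈ Set.Icc (Real.sqrt (δ ^ 2 - ε ^ 2)) δ ∧
       p.2.1 ∈ Set.Icc (Real.sqrt (δ ^ 2 - ε ^ 2)) δ ∧
       p.2.2.1 ∈ Set.Icc (Real.sqrt (δ ^ 2 - ε ^ 2)) δ ∧
       p.2.2.1 ≤ p.2.1 ∧ 0 ≤ p.2.2.2 ∧
       p.2.1 ^ 2 + p.2.2.1 ^ 2 = 2 * p.1 ^ 2 + 2 * p.2.2.2 ^ 2}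

/-- auxiliary: `h t = (1-t) e^t` -/
noncomputable def hh (t : ℝ) : ℝ := (1 - t) * Real.exp t

lemma hh_deriv (t : ℝ) : HasDerivAt hh (-t * Real.exp t) t := by
  have h1 : HasDerivAt (fun t : ℝ => (1 - t)) (-1) t := by
    simpa using (hasDerivAt_id t).const_sub 1
  have := h1.mul (Real.hasDerivAt_exp t)
  refine (this.congr_deriv ?_)
  ring

lemma hh_anti {x y : ℝ} (hx : 0 ≤ x) (hxy : x ≤ y) : hh y ≤ hh x := by
  have : AntitoneOn hh (Set.Ici 0) := by
    apply antitoneOn_of_deriv_nonpos (convex_Ici 0)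
    · exact fun t _ => (hh_deriv t).continuousAt.continuousWithinAt
    · exact fun t _ => (hh_deriv t).differentiableAt.differentiableWithinAt
    · intro t ht
      rw [interior_Ici] at ht
      rw [(hh_deriv t).deriv]
      have := Real.exp_pos t
      have h0 : 0 < t := ht
      nlinarith
  exact this hx (hx.trans hxy) hxy

lemma hh_mono {x y : ℝ} (hy : y ≤ 0) (hxy : x ≤ y) : hh x ≤ hh y := by
  have : MonotoneOn hh (Set.Iic 0) := by
    apply monotoneOn_of_deriv_nonneg (convex_Iic 0)
    · exact fun t _ => (hh_deriv t).continuousAt.continuousWithinAt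
    · exact fun t _ => (hh_deriv t).differentiableAt.differentiableWithinAt
    · intro t ht
      rw [interior_Iic] at ht
      rw [(hh_deriv t).deriv]
      have := Real.exp_pos t
      have h0 : t < 0 := ht
      nlinarith
  exact this (hxy.trans hy) hy hxy

lemma fd_eq (a m p θ : ℝ) :
    fδ a m p θ = 2 * hh a - hh m * Real.exp (-θ) - hh p * Real.exp θ := by
  unfold fδ hh
  rw [Real.exp_add, sub_eq_add_neg m θ, Real.exp_add]
  ring

/-- derivative of `h(√w)` along a path -/
lemma HH_deriv {w : ℝ → ℝ} {w' t : ℝ} (hw : HasDerivAt w w' t) (h0 : 0 < w t) :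
    HasDerivAt (fun t => hh (Real.sqrt (w t))) (-(Real.exp (Real.sqrt (w t)) / 2 * w')) t := by
  have h1 := (hh_deriv (Real.sqrt (w t))).comp t (hw.sqrt h0.ne')
  refine h1.congr_deriv ?_
  have : 0 < Real.sqrt (w t) := Real.sqrt_pos.2 h0
  field_simp

/-- monotone from derivative sign on a closed interval -/
lemma mono_end {F F' : ℝ → ℝ} {p q : ℝ} (hpq : p ≤ q)
    (hF : ∀ x ∈ Set.Icc p q, HasDerivAt F (F' x) x) (h0 : ∀ x ∈ Set.Icc p q, 0 ≤ F' x) :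
    F p ≤ F q := by
  have : MonotoneOn F (Set.Icc p q) := by
    apply monotoneOn_of_deriv_nonneg (convex_Icc p q)
    · exact fun t ht => (hF t ht).continuousAt.continuousWithinAt
    · exact fun t ht => (hF t (interior_subset ht)).differentiableAt.differentiableWithinAt
    · intro t ht
      rw [(hF t (interior_subset ht)).deriv]
      exact h0 t (interior_subset ht)
  exact this ⟨le_rfl, hpq⟩ ⟨hpq, le_rfl⟩ hpq

/-- quasi-concavity from a single crossing derivative -/
lemma quasi {F K : ℝ → ℝ} {p q x : ℝ} (hx : x ∈ Set.Icc p q)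
    (hF : ∀ x ∈ Set.Icc p q, HasDerivAt F (Real.exp x * K x) x)
    (hK : ∀ x ∈ Set.Icc p q, ∀ y ∈ Set.Icc p q, x ≤ y → 0 ≤ K y → 0 ≤ K x) :
    min (F p) (F q) ≤ F x := by
  by_cases h : 0 ≤ K x
  · refine (min_le_left _ _).trans ?_
    refine mono_end hx.1 (fun y hy => hF y ⟨hy.1, hy.2.trans hx.2⟩) ?_
    intro y hy
    have := hK y ⟨hy.1, hy.2.trans hx.2⟩ x hx hy.2 h
    positivity
  · refine (min_le_right _ _).trans ?_
    have := mono_end (F := fun y => - F y) (F' := fun y => -(Real.exp y * K y)) hx.2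
      (fun y hy => (hF y ⟨hx.1.trans hy.1, hy.2⟩).neg) ?_
    · simpa using this
    · intro y hy
      have h2 : ¬ 0 ≤ K y := fun h3 => h (hK x hx y ⟨hx.1.trans hy.1, hy.2⟩ hy.1 h3)
      have := Real.exp_pos y
      push Not at h2
      nlinarith

/-- tangent line bound -/
lemma tangent {x y : ℝ} (hx : 0 ≤ x) (hy : 0 ≤ y) :
    hh x ≤ hh y - Real.exp y * (x ^ 2 - y ^ 2) / 2 := by
  have hd : ∀ t, HasDerivAt (fun t => hh y - Real.exp y * (t ^ 2 - y ^ 2) / 2 - hh t)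
      (t * (Real.exp t - Real.exp y)) t := by
    intro t
    have h1 : HasDerivAt (fun t : ℝ => t ^ 2) (2 * t) t := by simpa using hasDerivAt_pow 2 t
    have := ((((h1.sub_const (y ^ 2)).const_mul (Real.exp y)).div_const 2).const_sub
      (hh y)).sub (hh_deriv t)
    refine this.congr_deriv ?_
    ring
  rcases le_total y x with h | h
  · have := mono_end h (fun t _ => hd t) (by
      intro t ht
      have : Real.exp y ≤ Real.exp t := Real.exp_le_exp.2 ht.1
      exact mul_nonneg (hy.trans ht.1) (by linarith))
    simp at this
    linarith
  · have := mono_end h (fun t _ => (hd t).neg) (by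
      intro t ht
      have h1 : Real.exp t ≤ Real.exp y := Real.exp_le_exp.2 ht.2
      have h2 := mul_nonneg (hx.trans ht.1) (sub_nonneg.2 h1)
      linarith)
    simp at this
    linarith

lemma stepA {a m p θ : ℝ} (h0 : 0 ≤ θ) (h1 : θ ≤ a) (hm : 0 ≤ m) (hp : 0 ≤ p)
    (h : m ^ 2 + p ^ 2 = 2 * a ^ 2 + 2 * θ ^ 2) : 0 ≤ fδ a m p θ := by
  have t1 := tangent hm (by linarith : 0 ≤ a + θ)
  have t2 := tangent hp (by linarith : 0 ≤ a - θ)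
  have e1 := mul_le_mul_of_nonneg_right t1 (Real.exp_pos (-θ)).le
  have e2 := mul_le_mul_of_nonneg_right t2 (Real.exp_pos θ).le
  have k : Real.exp θ * Real.exp (-θ) = 1 := by rw [← Real.exp_add]; simp
  rw [fd_eq]
  have r1 : (hh (a + θ) - Real.exp (a + θ) * (m ^ 2 - (a + θ) ^ 2) / 2) * Real.exp (-θ)
      = Real.exp a * (1 - (a + θ) - (m ^ 2 - (a + θ) ^ 2) / 2) := by
    unfold hh
    rw [Real.exp_add]
    linear_combination (Real.exp a * (1 - (a + θ) - (m ^ 2 - (a + θ) ^ 2) / 2)) * k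
  have r2 : (hh (a - θ) - Real.exp (a - θ) * (p ^ 2 - (a - θ) ^ 2) / 2) * Real.exp θ
      = Real.exp a * (1 - (a - θ) - (p ^ 2 - (a - θ) ^ 2) / 2) := by
    unfold hh
    rw [sub_eq_add_neg a θ, Real.exp_add]
    linear_combination (Real.exp a * (1 - (a + -θ) - (p ^ 2 - (a + -θ) ^ 2) / 2)) * k
  rw [r1] at e1
  rw [r2] at e2
  have r3 : Real.exp a * (1 - (a + θ) - (m ^ 2 - (a + θ) ^ 2) / 2) +
      Real.exp a * (1 - (a - θ) - (p ^ 2 - (a - θ) ^ 2) / 2) = 2 * hh a := by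
    unfold hh
    linear_combination (-Real.exp a / 2) * h
  linarith

lemma exp_neg_deriv (t : ℝ) : HasDerivAt (fun t : ℝ => Real.exp (-t)) (-Real.exp (-t)) t := by
  have := (hasDerivAt_neg t).exp
  simpa using this

lemma sq_deriv (t : ℝ) : HasDerivAt (fun t : ℝ => t ^ 2) (2 * t) t := by
  simpa using hasDerivAt_pow 2 t

/-- one-parameter family at the corner `a = a₊ = s` -/
noncomputable def phi (s θ : ℝ) : ℝ := fδ s (Real.sqrt (s ^ 2 + 2 * θ ^ 2)) s θ

lemma stepE {s θ T : ℝ} (hs : 0 < s) (h0 : 0 ≤ θ) (h1 : θ ≤ T) :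
    min 0 (phi s T) ≤ phi s θ := by
  have hz : phi s 0 = 0 := by
    unfold phi
    rw [fd_eq]
    simp [Real.sqrt_sq hs.le]
    ring
  have := quasi (F := phi s) (K := fun t => hh (Real.sqrt (s ^ 2 + 2 * t ^ 2) - 2 * t) - hh s)
    (p := 0) (q := T) (x := θ) ⟨h0, h1⟩ ?_ ?_
  · rwa [hz] at this
  · intro t ht
    have hw : HasDerivAt (fun t : ℝ => s ^ 2 + 2 * t ^ 2) (2 * (2 * t)) t :=
      ((sq_deriv t).const_mul 2).const_add _
    have hp : 0 < s ^ 2 + 2 * t ^ 2 := by positivity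
    have e : phi s = fun θ => 2 * hh s -
        hh (Real.sqrt (s ^ 2 + 2 * θ ^ 2)) * Real.exp (-θ) - hh s * Real.exp θ := by
      funext θ
      unfold phi
      rw [fd_eq]
    rw [e]
    have := (((HH_deriv hw hp).mul (exp_neg_deriv t)).const_sub (2 * hh s)).sub
      ((Real.hasDerivAt_exp t).const_mul (hh s))
    refine this.congr_deriv ?_
    set r := Real.sqrt (s ^ 2 + 2 * t ^ 2)
    have k1 : Real.exp (r - 2 * t) = Real.exp r * Real.exp (-t) * Real.exp (-t) := by
      rw [← Real.exp_add, ← Real.exp_add]; ring_nf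
    have k : Real.exp t * Real.exp (-t) = 1 := by rw [← Real.exp_add]; simp
    unfold hh
    rw [k1]
    linear_combination (-(1 - r + 2 * t) * Real.exp r * Real.exp (-t)) * k
  · intro x hx y hy hxy hK
    have key : Real.sqrt (s ^ 2 + 2 * y ^ 2) - 2 * y ≤ Real.sqrt (s ^ 2 + 2 * x ^ 2) - 2 * x := by
      have hr := Real.sq_sqrt (by positivity : 0 ≤ s ^ 2 + 2 * x ^ 2)
      have hr0 := Real.sqrt_nonneg (s ^ 2 + 2 * x ^ 2)
      have hrx : x ≤ Real.sqrt (s ^ 2 + 2 * x ^ 2) := Real.le_sqrt_of_sq_le (by nlinarith [sq_nonneg x, sq_nonneg s])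
      have : Real.sqrt (s ^ 2 + 2 * y ^ 2) ≤ Real.sqrt (s ^ 2 + 2 * x ^ 2) + 2 * (y - x) := by
        apply Real.sqrt_le_iff.2
        constructor
        · linarith
        · nlinarith [mul_nonneg (sub_nonneg.2 hxy) (sub_nonneg.2 hrx), sq_nonneg (y - x)]
      linarith
    have key2 : Real.sqrt (s ^ 2 + 2 * x ^ 2) - 2 * x ≤ s := by
      have : Real.sqrt (s ^ 2 + 2 * x ^ 2) ≤ s + 2 * x := by
        apply Real.sqrt_le_iff.2
        have := hx.1
        constructor
        · linarith
        · nlinarith [mul_nonneg hs.le hx.1, sq_nonneg x]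
      linarith
    rcases le_total 0 (Real.sqrt (s ^ 2 + 2 * x ^ 2) - 2 * x) with h | h
    · have := hh_anti h key2
      linarith
    · have := hh_mono h key
      linarith

lemma stepC {s a m θ : ℝ} (hs : 0 < s) (ha : s ≤ a) (hθ : s ≤ θ - a ∨ a = s) (hm : 0 ≤ m)
    (h : m ^ 2 + s ^ 2 = 2 * a ^ 2 + 2 * θ ^ 2) : phi s θ ≤ fδ a m s θ := by
  have hm2 : m = Real.sqrt (2 * a ^ 2 + 2 * θ ^ 2 - s ^ 2) := by
    rw [eq_comm, Real.sqrt_eq_iff_mul_self_eq (by nlinarith) hm]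
    nlinarith
  rcases hθ with hθ | hθ
  swap
  · unfold phi
    rw [hm2, hθ]
    apply le_of_eq
    ring_nf
  have hpos : ∀ x ∈ Set.Icc s a, 0 < 2 * x ^ 2 + 2 * θ ^ 2 - s ^ 2 := by
    intro x hx
    have := hx.1
    nlinarith [sq_nonneg θ]
  have := mono_end (F := fun x => 2 * hh x -
      hh (Real.sqrt (2 * x ^ 2 + 2 * θ ^ 2 - s ^ 2)) * Real.exp (-θ) - hh s * Real.exp θ)
    (F' := fun x => 2 * x * (Real.exp (Real.sqrt (2 * x ^ 2 + 2 * θ ^ 2 - s ^ 2)) * Real.exp (-θ)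
      - Real.exp x)) ha ?_ ?_
  · unfold phi
    rw [fd_eq, fd_eq, hm2]
    convert this using 6
    ring_nf
  · intro x hx
    have hw : HasDerivAt (fun x : ℝ => 2 * x ^ 2 + 2 * θ ^ 2 - s ^ 2) (2 * (2 * x)) x :=
      (((sq_deriv x).const_mul 2).add_const _).sub_const _
    have := ((((hh_deriv x).const_mul 2).sub ((HH_deriv hw (hpos x hx)).mul_const
      (Real.exp (-θ)))).sub_const (hh s * Real.exp θ))
    refine this.congr_deriv ?_
    ring
  · intro x hx
    have hx1 := hx.1
    have hx2 := hx.2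
    have : x + θ ≤ Real.sqrt (2 * x ^ 2 + 2 * θ ^ 2 - s ^ 2) := by
      apply Real.le_sqrt_of_sq_le
      nlinarith
    apply mul_nonneg (by linarith)
    rw [← Real.exp_add, sub_nonneg]
    apply Real.exp_le_exp.2
    linarith

set_option maxHeartbeats 1000000 in
/-- `a₊ = s`, `a₋ = m` fixed. -/
lemma stepD {s a m θ : ℝ} (hs : 0 < s) (ha : s ≤ a) (hθ : a ≤ θ) (hm : s ≤ m)
    (h : m ^ 2 + s ^ 2 = 2 * a ^ 2 + 2 * θ ^ 2) :
    ∃ T, 0 ≤ T ∧ 2 * T ^ 2 ≤ m ^ 2 - s ^ 2 ∧ min 0 (phi s T) ≤ fδ a m s θ := by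
  by_cases hc : s ≤ θ - a
  · exact ⟨θ, by linarith, by nlinarith, (min_le_right _ _).trans
      (stepC hs ha (Or.inl hc) (by linarith) h)⟩
  push Not at hc
  set c := (m ^ 2 + s ^ 2) / 2 with hcdef
  have hca : a = Real.sqrt (c - θ ^ 2) := by
    rw [eq_comm, Real.sqrt_eq_iff_mul_self_eq (by nlinarith) (by linarith)]
    nlinarith
  -- the right end point
  obtain ⟨q, hq1, hq2, hq3, hq4⟩ : ∃ q, θ ≤ q ∧ s ^ 2 ≤ c - q ^ 2 ∧
      q - Real.sqrt (c - q ^ 2) ≤ s ∧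
      (s ≤ q - Real.sqrt (c - q ^ 2) ∨ Real.sqrt (c - q ^ 2) = s) := by
    by_cases hh1 : c - s ^ 2 ≤ (2 * s) ^ 2
    · have hn : 0 ≤ c - s ^ 2 := by nlinarith
      have e := Real.sq_sqrt hn
      have e2 : c - Real.sqrt (c - s ^ 2) ^ 2 = s ^ 2 := by rw [e]; ring
      refine ⟨Real.sqrt (c - s ^ 2), ?_, ?_, ?_, ?_⟩
      · apply Real.le_sqrt_of_sq_le
        nlinarith
      · rw [e2]
      · rw [e2, Real.sqrt_sq hs.le]
        have : Real.sqrt (c - s ^ 2) ≤ 2 * s := Real.sqrt_le_iff.2 ⟨by linarith, hh1⟩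
        linarith
      · right
        rw [e2, Real.sqrt_sq hs.le]
    · push Not at hh1
      have hm3 : 3 * s ≤ m := by nlinarith
      have e2 : c - ((s + m) / 2) ^ 2 = ((m - s) / 2) ^ 2 := by rw [hcdef]; ring
      have e3 : Real.sqrt (c - ((s + m) / 2) ^ 2) = (m - s) / 2 := by
        rw [e2, Real.sqrt_sq (by linarith)]
      refine ⟨(s + m) / 2, ?_, ?_, ?_, ?_⟩
      · by_contra hcon
        push Not at hcon
        nlinarith
      · rw [e2]; nlinarith
      · rw [e3]; linarith
      · left; rw [e3]; linarith
  set p := Real.sqrt (c / 2) with hpdef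
  have hcpos : 0 < c := by positivity
  have hp2 : p ^ 2 = c / 2 := Real.sq_sqrt (by positivity)
  have hp0 : 0 < p := Real.sqrt_pos.2 (by positivity)
  have hpθ : p ≤ θ := by
    apply Real.sqrt_le_iff.2
    constructor
    · linarith
    · nlinarith
  have hpe : Real.sqrt (c - p ^ 2) = p := by
    rw [hp2, hpdef]
    congr 1
    ring
  -- facts on the interval
  have facts : ∀ t ∈ Set.Icc p q, s ^ 2 ≤ c - t ^ 2 ∧ s ≤ Real.sqrt (c - t ^ 2) ∧
      Real.sqrt (c - t ^ 2) ≤ t ∧ t - Real.sqrt (c - t ^ 2) ≤ s := by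
    intro t ht
    have ht1 := ht.1
    have ht2 := ht.2
    have hm1 : Real.sqrt (c - t ^ 2) ≤ Real.sqrt (c - p ^ 2) :=
      Real.sqrt_le_sqrt (by nlinarith)
    have hm2 : Real.sqrt (c - q ^ 2) ≤ Real.sqrt (c - t ^ 2) :=
      Real.sqrt_le_sqrt (by nlinarith)
    have h1 : s ^ 2 ≤ c - t ^ 2 := by nlinarith
    exact ⟨h1, Real.le_sqrt_of_sq_le h1, by linarith, by linarith⟩
  have hwd : ∀ t : ℝ, HasDerivAt (fun t : ℝ => c - t ^ 2) (-(2 * t)) t := fun t =>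
    (sq_deriv t).const_sub c
  have hpos : ∀ t ∈ Set.Icc p q, 0 < c - t ^ 2 := fun t ht => by
    have := (facts t ht).1
    nlinarith
  have main := quasi (F := fun t => 2 * hh (Real.sqrt (c - t ^ 2)) - hh m * Real.exp (-t)
      - hh s * Real.exp t)
    (K := fun t => 2 * t * Real.exp (Real.sqrt (c - t ^ 2) - t) + hh m * Real.exp (-(2 * t)) - hh s)
    (p := p) (q := q) (x := θ) ⟨hpθ, hq1⟩ ?_ ?_
  · refine ⟨q, by linarith, by nlinarith, ?_⟩
    simp only [← fd_eq] at main
    rw [← hca] at main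
    refine le_trans ?_ main
    apply min_le_min
    · rw [hpe]
      refine stepA hp0.le le_rfl (by linarith) hs.le ?_
      rw [hp2]; ring
    · refine stepC hs (Real.le_sqrt_of_sq_le hq2) hq4 (by linarith) ?_
      rw [Real.sq_sqrt (by nlinarith)]
      ring
  · intro t ht
    have := (((HH_deriv (hwd t) (hpos t ht)).const_mul 2).sub
      ((exp_neg_deriv t).const_mul (hh m))).sub ((Real.hasDerivAt_exp t).const_mul (hh s))
    refine this.congr_deriv ?_
    have k1 : Real.exp (Real.sqrt (c - t ^ 2) - t) =
        Real.exp (Real.sqrt (c - t ^ 2)) * Real.exp (-t) := by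
      rw [← Real.exp_add]; ring_nf
    have k2 : Real.exp (-(2 * t)) = Real.exp (-t) * Real.exp (-t) := by
      rw [← Real.exp_add]; ring_nf
    have k : Real.exp t * Real.exp (-t) = 1 := by rw [← Real.exp_add]; simp
    rw [k1, k2]
    linear_combination (-(2 * t * Real.exp (Real.sqrt (c - t ^ 2))) - hh m * Real.exp (-t)) * k
  · intro x hx y hy hxy hK
    refine le_trans hK ?_
    have sub : ∀ t ∈ Set.Icc x y, t ∈ Set.Icc p q := fun t ht =>
      ⟨hx.1.trans ht.1, ht.2.trans hy.2⟩
    have := mono_end (F := fun t => -(2 * t * Real.exp (Real.sqrt (c - t ^ 2) - t)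
        + hh m * Real.exp (-(2 * t)) - hh s))
      (F' := fun t => 2 * Real.exp (-(2 * t)) * (hh m - Real.exp (Real.sqrt (c - t ^ 2) + t) *
        (1 - t - t ^ 2 / Real.sqrt (c - t ^ 2)))) hxy ?_ ?_
    · exact neg_le_neg_iff.1 this
    · intro t ht
      have hr : 0 < Real.sqrt (c - t ^ 2) := Real.sqrt_pos.2 (hpos t (sub t ht))
      have d1 := (((hwd t).sqrt (hpos t (sub t ht)).ne').sub (hasDerivAt_id t)).exp
      have d2 := ((hasDerivAt_id t).const_mul 2).mul d1
      have d3 := (((hasDerivAt_id t).const_mul 2).neg.exp).const_mul (hh m)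
      have := ((d2.add d3).sub_const (hh s)).neg
      refine this.congr_deriv ?_
      simp only [id, Pi.sub_apply, Pi.neg_apply]
      set r := Real.sqrt (c - t ^ 2)
      have k1 : Real.exp (r - t) = Real.exp (-(2 * t)) * Real.exp (r + t) := by
        rw [← Real.exp_add]; ring_nf
      rw [k1]
      field_simp
      ring
    · intro t ht
      obtain ⟨f1, f2, f3, f4⟩ := facts t (sub t ht)
      have hsq := Real.sq_sqrt (hpos t (sub t ht)).le
      set r := Real.sqrt (c - t ^ 2)
      have hr : 0 < r := by linarith
      have hmr : m ≤ r + t := by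
        have w1 : (t - r) ^ 2 ≤ s ^ 2 := pow_le_pow_left₀ (by linarith) f4 2
        have w2 : (t - r) ^ 2 + (r + t) ^ 2 = m ^ 2 + s ^ 2 := by
          linear_combination 2 * hsq + 2 * hcdef
        have w3 : m ^ 2 ≤ (r + t) ^ 2 := by linarith
        exact (abs_le_of_sq_le_sq' w3 (by linarith)).2
      have g1 := hh_anti (by linarith) hmr
      have g2 : r ≤ t ^ 2 / r := by
        rw [le_div_iff₀ hr]; nlinarith
      have g3 : Real.exp (r + t) * (1 - t - t ^ 2 / r) ≤ Real.exp (r + t) * (1 - t - r) :=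
        mul_le_mul_of_nonneg_left (by linarith) (Real.exp_pos _).le
      apply mul_nonneg (by positivity)
      have g4 : hh (r + t) = Real.exp (r + t) * (1 - t - r) := by unfold hh; ring
      linarith

lemma stepB {s a m p θ : ℝ} (hs : 0 < s) (ha : s ≤ a) (hm : s ≤ m) (hp : s ≤ p)
    (hθ : a ≤ θ) (h : m ^ 2 + p ^ 2 = 2 * a ^ 2 + 2 * θ ^ 2) :
    ∃ T, 0 ≤ T ∧ 2 * T ^ 2 ≤ m ^ 2 - s ^ 2 ∧ min 0 (phi s T) ≤ fδ a m p θ := by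
  have hpe : p = Real.sqrt (2 * a ^ 2 + 2 * θ ^ 2 - m ^ 2) := by
    rw [eq_comm, Real.sqrt_eq_iff_mul_self_eq (by nlinarith) (by linarith)]
    nlinarith
  have path : ∀ L, a ≤ L → L ≤ θ → s ^ 2 ≤ 2 * a ^ 2 + 2 * L ^ 2 - m ^ 2 →
      fδ a m (Real.sqrt (2 * a ^ 2 + 2 * L ^ 2 - m ^ 2)) L ≤ fδ a m p θ := by
    intro L hL1 hL2 hL3
    have low : ∀ t ∈ Set.Icc L θ, s ^ 2 ≤ 2 * a ^ 2 + 2 * t ^ 2 - m ^ 2 := by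
      intro t ht
      have := ht.1
      nlinarith
    have := mono_end (F := fun t => 2 * hh a - hh m * Real.exp (-t) -
        hh (Real.sqrt (2 * a ^ 2 + 2 * t ^ 2 - m ^ 2)) * Real.exp t)
      (F' := fun t => Real.exp (-t) *
        (hh m - hh (Real.sqrt (2 * a ^ 2 + 2 * t ^ 2 - m ^ 2) + 2 * t))) hL2 ?_ ?_
    · rw [fd_eq, fd_eq, hpe]
      exact this
    · intro t ht
      have hw : HasDerivAt (fun t : ℝ => 2 * a ^ 2 + 2 * t ^ 2 - m ^ 2) (2 * (2 * t)) t :=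
        (((sq_deriv t).const_mul 2).const_add _).sub_const _
      have hp0 : 0 < 2 * a ^ 2 + 2 * t ^ 2 - m ^ 2 := by nlinarith [low t ht]
      have := (((exp_neg_deriv t).const_mul (hh m)).const_sub (2 * hh a)).sub
        ((HH_deriv hw hp0).mul (Real.hasDerivAt_exp t))
      refine this.congr_deriv ?_
      set r := Real.sqrt (2 * a ^ 2 + 2 * t ^ 2 - m ^ 2)
      have k1 : Real.exp (r + 2 * t) = Real.exp r * Real.exp t * Real.exp t := by
        rw [← Real.exp_add, ← Real.exp_add]; ring_nf
      have k : Real.exp t * Real.exp (-t) = 1 := by rw [← Real.exp_add]; simp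
      unfold hh
      rw [k1]
      linear_combination ((1 - r - 2 * t) * Real.exp r * Real.exp t) * k
    · intro t ht
      have ht1 := ht.1
      have hp0 : 0 ≤ 2 * a ^ 2 + 2 * t ^ 2 - m ^ 2 := by nlinarith [low t ht]
      have e := Real.sq_sqrt hp0
      have e0 := Real.sqrt_nonneg (2 * a ^ 2 + 2 * t ^ 2 - m ^ 2)
      set r := Real.sqrt (2 * a ^ 2 + 2 * t ^ 2 - m ^ 2)
      have hmr : m ≤ r + 2 * t := by
        have ht0 : 0 ≤ t := by linarith
        have : m ^ 2 ≤ (r + 2 * t) ^ 2 := by nlinarith [mul_nonneg e0 ht0]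
        exact abs_le_of_sq_le_sq' this (by linarith) |>.2
      have := hh_anti (by linarith) hmr
      exact mul_nonneg (Real.exp_pos _).le (by linarith)
  by_cases hc : a ^ 2 ≤ (m ^ 2 + s ^ 2) / 2 - a ^ 2
  · set L := Real.sqrt ((m ^ 2 + s ^ 2) / 2 - a ^ 2) with hL
    have hL2 : L ^ 2 = (m ^ 2 + s ^ 2) / 2 - a ^ 2 := Real.sq_sqrt (by nlinarith)
    have hL1 : a ≤ L := Real.le_sqrt_of_sq_le hc
    have e : 2 * a ^ 2 + 2 * L ^ 2 - m ^ 2 = s ^ 2 := by rw [hL2]; ring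
    have hLθ : L ≤ θ := Real.sqrt_le_iff.2 ⟨by linarith, by nlinarith⟩
    have := path L hL1 hLθ e.ge
    rw [e, Real.sqrt_sq hs.le] at this
    obtain ⟨T, h1, h2, h3⟩ := stepD hs ha hL1 hm (by linarith)
    exact ⟨T, h1, h2, h3.trans this⟩
  · push Not at hc
    have e : s ^ 2 ≤ 2 * a ^ 2 + 2 * a ^ 2 - m ^ 2 := by linarith
    refine ⟨0, le_rfl, by nlinarith, (min_le_left _ _).trans (le_trans ?_ (path a le_rfl hθ e))⟩
    refine stepA (by linarith) le_rfl (by linarith) (Real.sqrt_nonneg _) ?_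
    rw [Real.sq_sqrt (by nlinarith)]
    ring

/-- `min(0, g(δ,ε))` is the least value of `f_δ` on `S_{δ,ε}`, and it is
attained: `f_δ(a,a,a,0) = 0` and the corner value is `g(δ,ε)`. -/
theorem stmt15 (ε δ : ℝ) (hε0 : 0 < ε) (hε1 : ε < Real.sqrt 2 * Real.log 2)
    (hδ : δ ∈ Set.Ioo ε 1) :
    (∀ p ∈ Sset δ ε, min 0 (g δ ε) ≤ fδ p.1 p.2.1 p.2.2.1 p.2.2.2) ∧
    (∃ p ∈ Sset δ ε, fδ p.1 p.2.1 p.2.2.1 p.2.2.2 = min 0 (g δ ε)) ∧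
    (∀ a ∈ Set.Icc (Real.sqrt (δ ^ 2 - ε ^ 2)) δ, fδ a a a 0 = 0) ∧
    fδ (Real.sqrt (δ ^ 2 - ε ^ 2)) δ (Real.sqrt (δ ^ 2 - ε ^ 2)) (ε / Real.sqrt 2)
      = g δ ε := by
  have hδ1 : ε < δ := hδ.1
  have hpos : 0 < δ ^ 2 - ε ^ 2 := by nlinarith
  have hs : 0 < Real.sqrt (δ ^ 2 - ε ^ 2) := Real.sqrt_pos.2 hpos
  have hsq : Real.sqrt (δ ^ 2 - ε ^ 2) ^ 2 = δ ^ 2 - ε ^ 2 := Real.sq_sqrt hpos.le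
  have hsδ : Real.sqrt (δ ^ 2 - ε ^ 2) ≤ δ :=
    Real.sqrt_le_iff.2 ⟨by linarith, by nlinarith⟩
  have hT2 : (ε / Real.sqrt 2) ^ 2 = ε ^ 2 / 2 := by
    rw [div_pow, Real.sq_sqrt (by norm_num)]
  have hT0 : 0 ≤ ε / Real.sqrt 2 := by positivity
  have hg : fδ (Real.sqrt (δ ^ 2 - ε ^ 2)) δ (Real.sqrt (δ ^ 2 - ε ^ 2)) (ε / Real.sqrt 2)
      = g δ ε := by
    unfold fδ g
    rw [Real.exp_add]
    ring
  have hz : ∀ a, fδ a a a 0 = 0 := by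
    intro a
    unfold fδ
    simp
    ring
  have hphi : phi (Real.sqrt (δ ^ 2 - ε ^ 2)) (ε / Real.sqrt 2) = g δ ε := by
    rw [← hg]
    unfold phi
    have : Real.sqrt (Real.sqrt (δ ^ 2 - ε ^ 2) ^ 2 + 2 * (ε / Real.sqrt 2) ^ 2) = δ := by
      rw [hsq, hT2, show δ ^ 2 - ε ^ 2 + 2 * (ε ^ 2 / 2) = δ ^ 2 by ring,
        Real.sqrt_sq (by linarith)]
    rw [this]
  refine ⟨?_, ?_, fun a _ => hz a, hg⟩
  · rintro ⟨a, m, p, θ⟩ ⟨ha, hm, hp, hpm, hθ, hc⟩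
    simp only at ha hm hp hpm hθ hc ⊢
    rcases le_total θ a with h | h
    · exact (min_le_left _ _).trans
        (stepA hθ h (hs.le.trans hm.1) (hs.le.trans hp.1) hc)
    · obtain ⟨T, h1, h2, h3⟩ := stepB hs ha.1 hm.1 hp.1 h hc
      have hTT : T ≤ ε / Real.sqrt 2 := by
        apply (abs_le_of_sq_le_sq' _ hT0).2
        have hm0 : 0 ≤ m := hs.le.trans hm.1
        have := hm.2
        rw [hT2]
        nlinarith
      have h4 := stepE hs h1 hTT
      rw [hphi] at h4
      exact (le_min (min_le_left _ _) h4).trans h3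
  · rcases le_total 0 (g δ ε) with h | h
    · refine ⟨(δ, δ, δ, 0), ⟨⟨hsδ, le_rfl⟩, ⟨hsδ, le_rfl⟩, ⟨hsδ, le_rfl⟩, le_rfl, le_rfl, ?_⟩, ?_⟩
      · simp only
        ring
      · rw [min_eq_left h]
        exact hz δ
    · refine ⟨(Real.sqrt (δ ^ 2 - ε ^ 2), δ, Real.sqrt (δ ^ 2 - ε ^ 2), ε / Real.sqrt 2),
        ⟨⟨le_rfl, hsδ⟩, ⟨hsδ, le_rfl⟩, ⟨le_rfl, hsδ⟩, hsδ, hT0, ?_⟩, ?_⟩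
      · simp only
        rw [hsq, hT2]
        ring
      · rw [min_eq_right h]
        exact hg
end

section
/- For every ε > 0, the equation g⁻(δ, ε) = 0 has exactly one solution δ in the open interval (ε, 3ε/(2√2)). -/
open MeasureTheory Real

/-- The function `g⁻(δ,ε)` whose root determines the sharp dyadic parameter
`δ⁻(ε)` for the lower Bellman function. -/
noncomputable def gm (δ ε : ℝ) : ℝ :=
  (1 + Real.sqrt (δ ^ 2 - ε ^ 2)) * Real.exp (-Real.sqrt (δ ^ 2 - ε ^ 2)) *
      (2 - Real.exp (-ε / Real.sqrt 2)) -
    (1 + δ) * Real.exp (-δ + ε / Real.sqrt 2)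

lemma h_pos (r : ℝ) (hr : r ^ 2 = 2) (hr1 : 1 < r) (hr2 : r < 2) (t : ℝ) (ht : 0 < t) :
    0 < 2 - Real.exp (-t) - (1 + r * t) * Real.exp (-(r * t) + t) := by
  have hd : ∀ x : ℝ, HasDerivAt
      (fun t : ℝ => 2 - Real.exp (-t) - (1 + r * t) * Real.exp (-(r * t) + t))
      (Real.exp (-x) - (1 - (2 - r) * x) * Real.exp (-(r * x) + x)) x := by
    intro x
    have h1 : HasDerivAt (fun t : ℝ => Real.exp (-t)) (Real.exp (-x) * (-1)) x :=
      (hasDerivAt_id x).neg.exp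
    have h2 : HasDerivAt (fun t : ℝ => r * t) r x := by
      simpa using (hasDerivAt_id x).const_mul r
    have h3 : HasDerivAt (fun t : ℝ => Real.exp (-(r * t) + t))
        (Real.exp (-(r * x) + x) * (-r + 1)) x :=
      (h2.neg.add (hasDerivAt_id x)).exp
    have h4 := (h1.const_sub 2).sub ((h2.const_add 1).mul h3)
    refine h4.congr_deriv ?_
    linear_combination (x * Real.exp (-(r * x) + x)) * hr
  have hm : StrictMonoOn
      (fun t : ℝ => 2 - Real.exp (-t) - (1 + r * t) * Real.exp (-(r * t) + t)) (Set.Ici 0) := by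
    apply strictMonoOn_of_deriv_pos (convex_Ici 0)
    · fun_prop
    · intro x hx
      rw [interior_Ici] at hx
      have hx : 0 < x := hx
      rw [(hd x).deriv]
      have h5 : Real.exp (-x) = Real.exp (-((2 - r) * x)) * Real.exp (-(r * x) + x) := by
        rw [← Real.exp_add]; ring_nf
      have h6 : -((2 - r) * x) + 1 < Real.exp (-((2 - r) * x)) :=
        Real.add_one_lt_exp (by have := mul_pos (sub_pos.2 hr2) hx; linarith)
      rw [h5, ← sub_mul]
      exact mul_pos (by linarith) (Real.exp_pos _)
  have := hm (Set.mem_Ici.2 le_rfl) (Set.mem_Ici.2 ht.le) ht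
  norm_num at this ⊢
  linarith

lemma k_neg (t : ℝ) (ht : 0 < t) : 1 - t / 2 - (1 + t / 2) * Real.exp (-t) < 0 := by
  have hd : ∀ x : ℝ, HasDerivAt (fun t : ℝ => 1 - t / 2 - (1 + t / 2) * Real.exp (-t))
      (-(1 / 2) + (1 + x) / 2 * Real.exp (-x)) x := by
    intro x
    have h1 : HasDerivAt (fun t : ℝ => Real.exp (-t)) (Real.exp (-x) * (-1)) x :=
      (hasDerivAt_id x).neg.exp
    have h2 : HasDerivAt (fun t : ℝ => t / 2) (1 / 2) x := (hasDerivAt_id x).div_const 2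
    have h4 := (h2.const_sub 1).sub ((h2.const_add 1).mul h1)
    refine h4.congr_deriv ?_
    ring
  have hm : StrictAntiOn
      (fun t : ℝ => 1 - t / 2 - (1 + t / 2) * Real.exp (-t)) (Set.Ici 0) := by
    apply strictAntiOn_of_deriv_neg (convex_Ici 0)
    · fun_prop
    · intro x hx
      rw [interior_Ici] at hx
      have hx : 0 < x := hx
      rw [(hd x).deriv]
      have h6 : x + 1 < Real.exp x := Real.add_one_lt_exp hx.ne'
      have h7 : Real.exp x * Real.exp (-x) = 1 := by rw [← Real.exp_add]; simp
      nlinarith [Real.exp_pos (-x)]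
  have := hm (Set.mem_Ici.2 le_rfl) (Set.mem_Ici.2 ht.le) ht
  norm_num at this ⊢
  linarith

/-- For every `ε > 0`, the equation `g⁻(δ,ε) = 0` has exactly one solution `δ`
in `(ε, 3ε/(2√2))`. -/
theorem stmt17 (ε : ℝ) (hε : 0 < ε) :
    ∃! δ : ℝ, δ ∈ Set.Ioo ε (3 * ε / (2 * Real.sqrt 2)) ∧ gm δ ε = 0 := by
  have hr : Real.sqrt 2 ^ 2 = 2 := Real.sq_sqrt (by norm_num)
  have hr0 : 0 < Real.sqrt 2 := by positivity
  have hr1 : 1 < Real.sqrt 2 := by nlinarith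
  have hr2 : Real.sqrt 2 < 3 / 2 := by nlinarith
  obtain ⟨t, ht⟩ : ∃ t, t = ε / Real.sqrt 2 := ⟨_, rfl⟩
  have het : ε = Real.sqrt 2 * t := by rw [ht]; field_simp
  have ht0 : 0 < t := by rw [ht]; positivity
  have hb : 3 * ε / (2 * Real.sqrt 2) = 3 / 2 * t := by rw [ht]; field_simp
  have he2 : ε ^ 2 = 2 * t ^ 2 := by rw [het, mul_pow, hr]
  have hg : ∀ δ, gm δ ε = (1 + Real.sqrt (δ ^ 2 - ε ^ 2)) * Real.exp (-Real.sqrt (δ ^ 2 - ε ^ 2)) *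
      (2 - Real.exp (-t)) - (1 + δ) * Real.exp (-δ + t) := by
    intro δ; rw [gm, ht, neg_div]
  rw [hb]
  have hlt : ε < 3 / 2 * t := by rw [het]; nlinarith
  have hA : 0 < gm ε ε := by
    rw [hg]
    have := h_pos _ hr hr1 (by linarith) t ht0
    rw [← het] at this
    simpa using this
  have hB : gm (3 / 2 * t) ε < 0 := by
    rw [hg]
    have hs : Real.sqrt ((3 / 2 * t) ^ 2 - ε ^ 2) = t / 2 := by
      rw [he2, show (3 / 2 * t) ^ 2 - 2 * t ^ 2 = (t / 2) ^ 2 by ring]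
      exact Real.sqrt_sq (by positivity)
    rw [hs, show -(3 / 2 * t) + t = -(t / 2) by ring]
    have h1 := mul_neg_of_pos_of_neg (Real.exp_pos (-(t / 2))) (k_neg t ht0)
    linarith
  have hc : Continuous (fun δ => gm δ ε) := by
    unfold gm; fun_prop
  have hanti : StrictAntiOn (fun δ => gm δ ε) (Set.Icc ε (3 / 2 * t)) := by
    apply strictAntiOn_of_deriv_neg (convex_Icc _ _) hc.continuousOn
    intro x hx
    rw [interior_Icc] at hx
    obtain ⟨hx1, hx2⟩ := hx
    have hpos : 0 < x ^ 2 - ε ^ 2 := by nlinarith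
    have hx0 : 0 < x := by linarith
    obtain ⟨s, hs⟩ : ∃ s, s = Real.sqrt (x ^ 2 - ε ^ 2) := ⟨_, rfl⟩
    have hs0 : 0 < s := by rw [hs]; exact Real.sqrt_pos.2 hpos
    have hs2 : s ^ 2 = x ^ 2 - ε ^ 2 := by rw [hs]; exact Real.sq_sqrt hpos.le
    have h1 : HasDerivAt (fun δ : ℝ => Real.sqrt (δ ^ 2 - ε ^ 2)) (x / s) x := by
      have h := (((hasDerivAt_id x).pow 2).sub_const (ε ^ 2)).sqrt hpos.ne'
      refine h.congr_deriv ?_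
      simp only [id, Pi.pow_apply]
      rw [← hs]; field_simp; norm_num
    have h2 : HasDerivAt (fun δ : ℝ => Real.exp (-Real.sqrt (δ ^ 2 - ε ^ 2)))
        (Real.exp (-s) * (-(x / s))) x := by
      have h := h1.neg.exp
      simp only [Pi.neg_apply, ← hs] at h
      exact h
    have h3 : HasDerivAt (fun δ : ℝ => Real.exp (-δ + t)) (Real.exp (-x + t) * (-1)) x :=
      ((hasDerivAt_id x).neg.add_const t).exp
    have h4 := (((h1.const_add 1).mul h2).mul_const (2 - Real.exp (-t))).sub
      (((hasDerivAt_id x).const_add 1).mul h3)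
    have h5 : HasDerivAt (fun δ => gm δ ε)
        (x * (Real.exp (-x + t) - Real.exp (-s) * (2 - Real.exp (-t)))) x := by
      rw [show (fun δ => gm δ ε) = _ from funext hg]
      refine h4.congr_deriv ?_
      simp only [← hs, id]
      field_simp
      ring
    rw [h5.deriv]
    apply mul_neg_of_pos_of_neg hx0
    have hst : s ≤ x - t := by
      exact abs_le_of_sq_le_sq' (by nlinarith) (by nlinarith) |>.2
    have h6 : Real.exp (-x + t) ≤ Real.exp (-s) := Real.exp_le_exp.2 (by linarith)
    have h7 : Real.exp (-t) < 1 := by rw [Real.exp_lt_one_iff]; linarith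
    nlinarith [Real.exp_pos (-s)]
  obtain ⟨δ, hδ, h0⟩ := intermediate_value_Ioo' hlt.le hc.continuousOn (show (0:ℝ) ∈ Set.Ioo _ _ from ⟨hB, hA⟩)
  refine ⟨δ, ⟨hδ, h0⟩, ?_⟩
  rintro y ⟨hy, hy0⟩
  exact hanti.injOn (Set.Ioo_subset_Icc_self hy) (Set.Ioo_subset_Icc_self hδ) (hy0.trans h0.symm)
end
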